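/- arXiv:2008.00361 — 2 statements merged into one kernel-verified Lean document; each statement's English description precedes it below -/
import Mathlib

section
/- For every integer k ≥ 1: if k is even, then GR_k(H1) = 17^(k/2) + 1, and if k is odd, then GR_k(H1) = 4·17^((k−1)/2) + 1. -/
open SimpleGraph

/-- A rainbow triangle in an edge-coloring of a complete graph: three distinct
vertices whose three pairwise edges receive three pairwise distinct colors. -/
def HasRainbowTriangle {n k : ℕ} (c : Fin n → Fin n → Fin k) : Prop :=
  ∃ u v w : Fin n, u ≠ v ∧ u ≠ w ∧ v ≠ w ∧
    c u v ≠ c u w ∧ c u v ≠ c v w ∧ c u w ≠ c v w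

/-- A Gallai `k`-coloring of `K_n`: a symmetric edge-coloring with no rainbow triangle. -/
def IsGallaiColoring {n k : ℕ} (c : Fin n → Fin n → Fin k) : Prop :=
  (∀ u v, c u v = c v u) ∧ ¬ HasRainbowTriangle c

/-- A monochromatic copy of the graph `F` in color `i`: an injection of the vertices
of `F` into the vertices of `K_n` mapping every edge of `F` to an edge colored `i`. -/
def HasMonoCopy {V : Type} (F : SimpleGraph V) {n k : ℕ}
    (c : Fin n → Fin n → Fin k) (i : Fin k) : Prop :=
  ∃ f : V → Fin n, Function.Injective f ∧ ∀ a b, F.Adj a b → c (f a) (f b) = i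

/-- The Gallai-Ramsey number `GR(F₁, …, F_k)`: the least `n` such that every Gallai
`k`-coloring of `K_n` contains, for some color `i`, a monochromatic copy of `Fᵢ`
in color `i`. -/
noncomputable def GR (k : ℕ) (F : Fin k → Σ V : Type, SimpleGraph V) : ℕ :=
  sInf {n : ℕ | ∀ c : Fin n → Fin n → Fin k, IsGallaiColoring c →
    ∃ i : Fin k, HasMonoCopy (F i).2 c i}

/-- The triangle `K₃`. -/
def GK3 : SimpleGraph (Fin 3) := ⊤

/-- The path `P₃` on three vertices (edges 0–1 and 1–2). -/
def GP3 : SimpleGraph (Fin 3) := SimpleGraph.fromRel (fun a _ => a = 1)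

/-- `H₁`: a `K₄` on `{0,1,2,3}` together with the extra vertex `4` adjacent to
exactly the vertex `3`. -/
def GH1 : SimpleGraph (Fin 5) :=
  SimpleGraph.fromRel (fun a b => (a ≠ 4 ∧ b ≠ 4) ∨ (a = 3 ∧ b = 4))

/-- `H₂`: `K₅` minus the two edges 0–1 and 1–2 of a path on three vertices. -/
def GH2 : SimpleGraph (Fin 5) :=
  (⊤ : SimpleGraph (Fin 5)) \
    SimpleGraph.fromRel (fun a b => (a = 0 ∧ b = 1) ∨ (a = 1 ∧ b = 2))

/-- `H₃`: `K₅` minus the edge 0–1. -/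
def GH3 : SimpleGraph (Fin 5) :=
  (⊤ : SimpleGraph (Fin 5)) \ SimpleGraph.fromRel (fun a b => a = 0 ∧ b = 1)

/-!
Lower bound: replacing every vertex of the Paley coloring on `17` vertices, which has no
monochromatic `K₄`, by a copy of a coloring with two colors fewer multiplies the order by `17`; one
starts from a monochromatic `K₄` or from the Paley coloring itself.

Upper bound, by induction on the number of vertices: a color avoiding `H₁` that is connected on more
than four vertices has no `K₄`. In a Gallai partition with reduced colors `a` and `b`, each part is
joined to another part completely in color `a`, and likewise in color `b`, so that inside a part the
clique numbers of both colors drop by one. The induction therefore has to treat colors avoiding `H₁`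
together with colors avoiding the triangle. The parts are then summed by choosing in each of them a
vertex, or an edge colored `a` or `b` if the part is too large for a vertex to pay for it: the
chosen vertices form a clique in the two colors `a` and `b`, to which `R(3, 3) ≤ 6`, `R(3, 4) ≤ 9`
and `R(4, 4) ≤ 18` apply.
-/

open Finset

namespace GallaiRamsey

section Cliques

variable {V : Type*} {G : SimpleGraph V}

theorem preconnected_iff_forall_exists_adj :
    G.Preconnected ↔
      ∀ X : Set V, X.Nonempty → Xᶜ.Nonempty → ∃ u ∈ X, ∃ v ∉ X, G.Adj u v := by
  constructor
  · rintro hG X ⟨x, hx⟩ ⟨y, hy⟩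
    obtain ⟨d, -, hfst, hsnd⟩ := (hG x y).some.exists_boundary_dart X hx hy
    exact ⟨d.fst, hfst, d.snd, hsnd, d.adj⟩
  · intro h x y
    by_contra hxy
    obtain ⟨u, hu, v, hv, huv⟩ := h {v | G.Reachable x v} ⟨x, .refl x⟩ ⟨y, hxy⟩
    exact hv (Reachable.trans hu huv.reachable)

theorem cliqueFreeOn_of_join {m : ℕ} {Q : Finset V} {X : Set V}
    (hG : G.CliqueFree (m + #Q)) (hQ : G.IsClique Q) (hX : ∀ q ∈ Q, ∀ x ∈ X, G.Adj q x) :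
    G.CliqueFreeOn X m := by
  classical
  intro T hTX hT
  have hdisj : Disjoint T Q := Finset.disjoint_left.2 fun x hxT hxQ =>
    (hX x hxQ x (hTX hxT)).ne rfl
  refine hG (T ∪ Q) ⟨?_, by rw [card_union_of_disjoint hdisj, hT.card_eq]⟩
  have := G.symm
  rw [coe_union, isClique_iff, Set.pairwise_union_of_symm]
  exact ⟨hT.isClique, hQ, fun x hx q hq _ => (hX q hq x (hTX hx)).symm⟩

theorem exists_join_of_not_preconnected_compl (hG : ¬ Gᶜ.Preconnected) :
    ∃ X : Set V, X.Nonempty ∧ Xᶜ.Nonempty ∧ ∀ u ∈ X, ∀ v ∉ X, G.Adj u v := by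
  simp only [preconnected_iff_forall_exists_adj, not_forall, not_exists, not_and] at hG
  obtain ⟨X, hX, hX', h⟩ := hG
  refine ⟨X, hX, hX', fun u hu v hv => ?_⟩
  by_contra huv
  exact h u hu v hv ⟨fun h => hv (h ▸ hu), huv⟩

theorem cliqueFreeOn_and_compl_of_join {m : ℕ} {X : Set V} {x y : V} (hG : G.CliqueFree (m + 1))
    (hXY : ∀ u ∈ X, ∀ v ∉ X, G.Adj u v) (hx : x ∈ X) (hy : y ∉ X) :
    G.CliqueFreeOn X m ∧ G.CliqueFreeOn Xᶜ m :=
  ⟨cliqueFreeOn_of_join (Q := {y}) hG (by simp) (by simpa using fun u hu => (hXY u hu y hy).symm),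
    cliqueFreeOn_of_join (Q := {x}) hG (by simp) (by simpa using hXY x hx)⟩

end Cliques

section Ramsey

/-- `N` is an upper bound for the Ramsey number `R(m, n)`: every graph on `N` vertices has a clique
of size `m` or an independent set of size `n`. -/
def IsRamseyBound (m n N : ℕ) : Prop :=
  ∀ G : SimpleGraph (Fin N), G.CliqueFree m → ¬ Gᶜ.CliqueFree n

variable {m n a b : ℕ}

theorem IsRamseyBound.symm {N : ℕ} (h : IsRamseyBound m n N) : IsRamseyBound n m N :=
  fun G hn hm => h Gᶜ hm (by rwa [compl_compl])

theorem isRamseyBound_two (n : ℕ) : IsRamseyBound 2 n n := fun G hG hn => by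
  rw [cliqueFree_two.1 hG, compl_bot] at hn
  exact (IsContained.refl (completeGraph (Fin n))).not_cliqueFree hn

theorem IsRamseyBound.card_lt {V : Type*} {G H : SimpleGraph V} {N : ℕ} {T : Finset V}
    (h : IsRamseyBound m n N) (hT : (G ⊔ H).IsClique T) (hG : G.CliqueFreeOn T m)
    (hH : H.CliqueFreeOn T n) : #T < N := by
  by_contra! hN
  obtain ⟨S, hST, rfl⟩ := exists_subset_card_eq hN
  let f : Fin #S ↪ V := S.equivFin.symm.toEmbedding.trans (.subtype _)
  have hf (Q : Finset (Fin #S)) : (Q.map f : Set V) ⊆ T := by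
    simp only [coe_map, Set.image_subset_iff]
    exact fun i _ => hST (S.equivFin.symm i).2
  have hle : (G.comap f)ᶜ ≤ H.comap f := fun i j hij => by
    have hi : ∀ i, f i ∈ T := fun i => hST (S.equivFin.symm i).2
    exact (hT (hi i) (hi j) (f.injective.ne hij.1)).resolve_left hij.2
  refine h (G.comap f) (fun Q hQ => hG (hf Q) ?_) (CliqueFree.anti hle fun Q hQ => hH (hf Q) ?_)
  · exact hQ.map.mono (map_comap_le f _)
  · exact hQ.map.mono (map_comap_le f _)

variable {V : Type*} [Fintype V] {G : SimpleGraph V}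

theorem IsRamseyBound.degree_lt [DecidableRel G.Adj] (h : IsRamseyBound m n a)
    (hG : G.CliqueFree (m + 1)) (hG' : Gᶜ.CliqueFree n) (v : V) : G.degree v < a := by
  refine h.card_lt (G := G) (H := Gᶜ) (T := G.neighborFinset v) ?_ ?_ hG'.cliqueFreeOn
  · simp [sup_compl_eq_top]
  · exact cliqueFreeOn_of_join (Q := {v}) (by simpa using hG) (by simp) (by simp)

theorem IsRamseyBound.add (h₁ : IsRamseyBound m (n + 1) (a + 1))
    (h₂ : IsRamseyBound (m + 1) n (b + 1)) : IsRamseyBound (m + 1) (n + 1) (a + b + 2) := by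
  classical
  intro G hG hG'
  have hdeg := h₁.degree_lt hG hG' 0
  have hdeg' := h₂.symm.degree_lt hG' (by rwa [compl_compl]) 0
  rw [degree_compl, Fintype.card_fin] at hdeg'
  lia

/-- When both bounds are even, the equality case of `IsRamseyBound.add` would be a regular graph of
odd degree on an odd number of vertices. -/
theorem IsRamseyBound.add_of_odd (ha : Odd a) (hb : Odd b) (h₁ : IsRamseyBound m (n + 1) (a + 1))
    (h₂ : IsRamseyBound (m + 1) n (b + 1)) : IsRamseyBound (m + 1) (n + 1) (a + b + 1) := by
  classical
  intro G hG hG'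
  have hreg (v : Fin (a + b + 1)) : G.degree v = a := by
    have hdeg := h₁.degree_lt hG hG' v
    have hdeg' := h₂.symm.degree_lt hG' (by rwa [compl_compl]) v
    rw [degree_compl, Fintype.card_fin] at hdeg'
    lia
  have heven := G.even_card_odd_degree_vertices
  simp only [hreg, ha, filter_true, card_univ, Fintype.card_fin] at heven
  grind

theorem isRamseyBound_three_three : IsRamseyBound 3 3 6 :=
  (isRamseyBound_two 3).add (isRamseyBound_two 3).symm

theorem isRamseyBound_three_four : IsRamseyBound 3 4 9 :=
  (isRamseyBound_two 4).add_of_odd (by decide) (by decide) isRamseyBound_three_three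

theorem isRamseyBound_four_four : IsRamseyBound 4 4 18 :=
  isRamseyBound_three_four.add isRamseyBound_three_four.symm

end Ramsey

universe u

/-- A Gallai coloring of the complete graph on `V` with colors in `K`. The values on the diagonal
carry no information, so the triangle condition needs no distinctness hypotheses: it holds trivially
when two of the three vertices coincide. -/
structure GallaiColoring (V K : Type*) where
  color : V → V → K
  color_comm : ∀ u v, color u v = color v u
  gallai : ∀ u v w, color u v = color u w ∨ color u v = color v w ∨ color u w = color v w

namespace GallaiColoring

variable {V : Type u} {K W : Type*}

instance : CoeFun (GallaiColoring V K) fun _ => V → V → K := ⟨color⟩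

/-- The graph formed by the edges of color `i`. -/
def graph (c : GallaiColoring V K) (i : K) : SimpleGraph V where
  Adj u v := u ≠ v ∧ c u v = i
  symm.symm _ _ h := ⟨h.1.symm, c.color_comm _ _ ▸ h.2⟩
  loopless.irrefl _ h := h.1 rfl

/-- The coloring pulled back along an injection. -/
def comap (c : GallaiColoring V K) (f : W ↪ V) : GallaiColoring W K where
  color u v := c (f u) (f v)
  color_comm _ _ := c.color_comm _ _
  gallai _ _ _ := c.gallai _ _ _

/-- The restriction of a coloring to a set of vertices. -/
abbrev induce (c : GallaiColoring V K) (X : Set V) : GallaiColoring X K :=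
  c.comap (.subtype _)

variable {c : GallaiColoring V K} {i j k : K} {u v w x y z : V}

theorem graph_adj : (c.graph i).Adj u v ↔ u ≠ v ∧ c u v = i := .rfl

theorem comap_apply (f : W ↪ V) (s t : W) : c.comap f s t = c (f s) (f t) := rfl

theorem graph_comap (f : W ↪ V) (i : K) : (c.comap f).graph i = (c.graph i).comap f := by
  ext s t
  simp only [graph_adj, comap_adj, comap_apply, f.injective.ne_iff]

theorem color_ne_of_not_reachable (h : ¬ (c.graph i).Reachable u v) : c u v ≠ i := fun hi =>
  h (Adj.reachable ⟨fun huv => h (huv ▸ .refl u), hi⟩)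

theorem color_eq_of_reachable (hyz : (c.graph i).Reachable y z)
    (hyx : ¬ (c.graph i).Reachable y x) : c y x = c z x := by
  obtain ⟨p⟩ := hyz
  induction p with
  | nil => rfl
  | @cons y w z hyw _ ih =>
    have hwx : ¬ (c.graph i).Reachable w x := fun h => hyx (hyw.reachable.trans h)
    rw [← ih hwx]
    rcases c.gallai y w x with h | h | h
    · exact absurd (h ▸ hyw.2) (color_ne_of_not_reachable hyx)
    · exact absurd (h ▸ hyw.2) (color_ne_of_not_reachable hwx)
    · exact h

section Deletion

theorem exists_reachable_color_eq (hi : (c.graph i).Preconnected) (y : ({x}ᶜ : Set V)) :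
    ∃ u : ({x}ᶜ : Set V), ((c.induce {x}ᶜ).graph i).Reachable y u ∧ c x u = i := by
  obtain ⟨_, ⟨u, hyu, rfl⟩, v, hv, huv⟩ := preconnected_iff_forall_exists_adj.1 hi
    (Subtype.val '' {u | ((c.induce {x}ᶜ).graph i).Reachable y u}) ⟨y, y, .refl y, rfl⟩
    ⟨x, by rintro ⟨u, -, hux⟩; exact u.2 hux⟩
  refine ⟨u, hyu, ?_⟩
  by_cases hvx : v = x
  · exact hvx ▸ (c.color_comm v u).trans huv.2
  · have huv' : ((c.induce {x}ᶜ).graph i).Adj u ⟨v, hvx⟩ :=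
      ⟨fun h => huv.1 (congrArg Subtype.val h), huv.2⟩
    exact absurd ⟨⟨v, hvx⟩, Reachable.trans hyu huv'.reachable, rfl⟩ hv

theorem color_eq_of_not_reachable (hi : (c.graph i).Preconnected) {y w : ({x}ᶜ : Set V)}
    (hxy : c x y ≠ i) (hyw : ¬ ((c.induce {x}ᶜ).graph i).Reachable y w) : c w y = c x y := by
  obtain ⟨u, hwu, hxu⟩ := exists_reachable_color_eq hi w
  have huy : c u y = c x y := by
    have hyu : c y u ≠ i :=
      color_ne_of_not_reachable (c := c.induce {x}ᶜ) fun h => hyw (h.trans hwu.symm)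
    rw [c.color_comm]
    rcases c.gallai x y u with h | h | h
    · exact absurd (h.trans hxu) hxy
    · exact h.symm
    · exact absurd (h ▸ hxu) hyu
  rw [← huy]
  exact color_eq_of_reachable (c := c.induce {x}ᶜ) hwu fun h => hyw h.symm

theorem preconnected_induce_compl_singleton (hij : i ≠ j) (hik : i ≠ k) (hjk : j ≠ k)
    (hi : (c.graph i).Preconnected) (hj : (c.graph j).Preconnected)
    (hk : (c.graph k).Preconnected) (x : V) : ((c.induce {x}ᶜ).graph i).Preconnected := by
  by_contra hx
  obtain ⟨v, w, hvw⟩ : ∃ v w, ¬ ((c.induce {x}ᶜ).graph i).Reachable v w := by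
    simpa [Preconnected] using hx
  obtain ⟨y, -, hy⟩ := exists_reachable_color_eq hj v
  obtain ⟨z, -, hz⟩ := exists_reachable_color_eq hk v
  have hyi : c x y ≠ i := hy ▸ hij.symm
  have hzi : c x z ≠ i := hz ▸ hik.symm
  by_cases hyz : ((c.induce {x}ᶜ).graph i).Reachable y z
  · obtain ⟨t, hyt⟩ : ∃ t, ¬ ((c.induce {x}ᶜ).graph i).Reachable y t := by
      by_contra! h
      exact hvw ((h v).symm.trans (h w))
    have hzt := fun h => hyt (hyz.trans h)
    have hty := color_eq_of_not_reachable hi hyi hyt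
    have htz := color_eq_of_not_reachable hi hzi hzt
    have hytz : c y t = c z t :=
      color_eq_of_reachable (c := c.induce {x}ᶜ) hyz hyt
    rw [c.color_comm, hytz, c.color_comm, htz, hy, hz] at hty
    exact hjk hty.symm
  · have hzy := color_eq_of_not_reachable hi hyi hyz
    have hyz' := color_eq_of_not_reachable hi hzi fun h => hyz h.symm
    rw [c.color_comm, hyz', hy, hz] at hzy
    exact hjk hzy.symm

theorem subsingleton_of_preconnected [Finite V] (hij : i ≠ j) (hik : i ≠ k) (hjk : j ≠ k)
    (hi : (c.graph i).Preconnected) (hj : (c.graph j).Preconnected)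
    (hk : (c.graph k).Preconnected) : Subsingleton V := by
  induction hn : Nat.card V using Nat.strong_induction_on generalizing V with
  | _ n ih =>
    by_contra! hV
    obtain ⟨x⟩ := hV.to_nonempty
    have hsub : Subsingleton ({x}ᶜ : Set V) := by
      refine ih _ ?_ (c := c.induce {x}ᶜ) ?_ ?_ ?_ rfl
      · rw [← hn, Nat.card_coe_set_eq, ← Set.ncard_univ]
        exact Set.ncard_lt_ncard (by simp [Set.ssubset_univ_iff])
      · exact preconnected_induce_compl_singleton hij hik hjk hi hj hk x
      · exact preconnected_induce_compl_singleton hij.symm hjk hik hj hi hk x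
      · exact preconnected_induce_compl_singleton hik.symm hjk.symm hij hk hi hj x
    obtain ⟨w, hw⟩ := exists_ne x
    obtain ⟨y, -, hy⟩ := exists_reachable_color_eq hj (⟨w, hw⟩ : ({x}ᶜ : Set V))
    obtain ⟨z, -, hz⟩ := exists_reachable_color_eq hk (⟨w, hw⟩ : ({x}ᶜ : Set V))
    exact hjk (by rw [← hy, ← hz, Subsingleton.elim y z])

end Deletion

theorem exists_color_eq_or_of_preconnected [Finite V] [Nontrivial V]
    (h : ∀ u v, u ≠ v → (c.graph (c u v)).Preconnected) :
    ∃ a b, ∀ u v, u ≠ v → c u v = a ∨ c u v = b := by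
  obtain ⟨u₀, v₀, h₀⟩ := exists_pair_ne V
  by_contra! hcol
  obtain ⟨u₁, v₁, h₁, h₁₀, -⟩ := hcol (c u₀ v₀) (c u₀ v₀)
  obtain ⟨u₂, v₂, h₂, h₂₀, h₂₁⟩ := hcol (c u₀ v₀) (c u₁ v₁)
  exact not_subsingleton V
    (subsingleton_of_preconnected h₁₀ h₂₁.symm h₂₀.symm (h _ _ h₁) (h _ _ h₀) (h _ _ h₂))

/-- The fibers of `p` form a Gallai partition with reduced colors `a` and `b`: the color of an edge
between two different parts depends only on the parts, and it is `a` or `b`. -/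
structure IsGallaiPartition {ι : Type*} (c : GallaiColoring V K) (p : V → ι) (a b : K) :
    Prop where
  surjective : Function.Surjective p
  color_eq : ∀ {u v w}, p u = p v → p u ≠ p w → c u w = c v w
  color_eq_or : ∀ {u v}, p u ≠ p v → c u v = a ∨ c u v = b

theorem IsGallaiPartition.comp {ι : Type*} {p : W → ι} {a b : K} {e : W ↪ V} {π : V → W}
    (hp : (c.comap e).IsGallaiPartition p a b) (hπ : Function.Surjective π)
    (hcolor : ∀ {u v}, π u ≠ π v → c u v = c (e (π u)) (e (π v))) :
    c.IsGallaiPartition (p ∘ π) a b where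
  surjective := hp.surjective.comp hπ
  color_eq {u v w} huv huw := by
    have hvw : p (π v) ≠ p (π w) := fun h => huw (huv.trans h)
    rw [hcolor (ne_of_apply_ne p huw), hcolor (ne_of_apply_ne p hvw)]
    exact hp.color_eq huv huw
  color_eq_or {u v} huv := by
    rw [hcolor (ne_of_apply_ne p huv)]
    exact hp.color_eq_or huv

theorem color_eq_color_of_not_reachable (huv : ¬ (c.graph i).Reachable u v)
    (hux : (c.graph i).Reachable u x) (hvy : (c.graph i).Reachable v y) : c u v = c x y := by
  rw [color_eq_of_reachable hux huv, c.color_comm x v, c.color_comm x y]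
  exact color_eq_of_reachable hvy fun h => huv (hux.trans h.symm)

/-- **Gallai's theorem**. -/
theorem exists_isGallaiPartition [Finite V] [Nontrivial V] (c : GallaiColoring V K) :
    ∃ (ι : Type u) (_ : Nontrivial ι) (p : V → ι) (a b : K), c.IsGallaiPartition p a b := by
  induction hn : Nat.card V using Nat.strong_induction_on generalizing V with
  | _ n ih =>
    by_cases hconn : ∀ u v, u ≠ v → (c.graph (c u v)).Preconnected
    · obtain ⟨a, b, hab⟩ := exists_color_eq_or_of_preconnected hconn
      exact ⟨V, ‹_›, id, a, b, Function.surjective_id, fun h _ => congrArg (c · _) h, hab _ _⟩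
    push Not at hconn
    obtain ⟨u, v, huv, hpre⟩ := hconn
    let π := (c.graph (c u v)).connectedComponentMk
    have hπ : Function.Surjective π := Quot.mk_surjective
    let e : (c.graph (c u v)).ConnectedComponent ↪ V := ⟨_, Function.injective_surjInv hπ⟩
    have heπ (w : V) : (c.graph (c u v)).Reachable w (e (π w)) :=
      ConnectedComponent.exact (Function.surjInv_eq hπ (π w)).symm
    have : Nontrivial (c.graph (c u v)).ConnectedComponent := by
      by_contra! h
      exact hpre fun s t => ConnectedComponent.exact (Subsingleton.elim _ _)
    have hlt : Nat.card (c.graph (c u v)).ConnectedComponent < n := by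
      by_contra! hle
      refine huv ((hπ.bijective_of_nat_card_le (hn ▸ hle)).injective ?_)
      exact ConnectedComponent.sound (Adj.reachable ⟨huv, rfl⟩)
    obtain ⟨ι, hι, p, a, b, hp⟩ := ih _ hlt (c.comap e) rfl
    refine ⟨ι, hι, p ∘ π, a, b, hp.comp hπ fun hst => ?_⟩
    exact color_eq_color_of_not_reachable (fun h => hst (ConnectedComponent.sound h))
      (heπ _) (heπ _)

end GallaiColoring

section Bound

/-- The bound on the order of a Gallai coloring with `s` colors avoiding `GH1` and `r` further
colors avoiding the triangle: a factor `17 = R(4, 4) - 1` or `5 = R(3, 3) - 1` for each pair of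
colors of the same kind, and a factor `4` or `2` for a color left over. -/
def mixedBound (s r : ℕ) : ℕ :=
  17 ^ (s / 2) * 4 ^ (s % 2) * (5 ^ (r / 2) * 2 ^ (r % 2))

theorem mixedBound_add_two_left (s r : ℕ) : mixedBound (s + 2) r = 17 * mixedBound s r := by
  simp only [mixedBound, Nat.add_div_right s two_pos, Nat.add_mod_right, pow_succ']
  ring

theorem mixedBound_add_two_right (s r : ℕ) : mixedBound s (r + 2) = 5 * mixedBound s r := by
  simp only [mixedBound, Nat.add_div_right r two_pos, Nat.add_mod_right, pow_succ']
  ring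

theorem mixedBound_one_left (r : ℕ) : mixedBound 1 r = 4 * mixedBound 0 r := by
  simp [mixedBound]

theorem mixedBound_one_right (s : ℕ) : mixedBound s 1 = 2 * mixedBound s 0 := by
  simp [mixedBound, mul_comm 2]

theorem two_mul_mixedBound_le (s r : ℕ) : 2 * mixedBound s r ≤ mixedBound s (r + 1) := by
  induction r using Nat.twoStepInduction with
  | zero => exact (mixedBound_one_right s).ge
  | one =>
    rw [mixedBound_one_right, mixedBound_add_two_right]
    lia
  | more r ih _ =>
    have h₀ := mixedBound_add_two_right s r
    have h₁ := mixedBound_add_two_right s (r + 1)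
    lia

theorem two_mul_mixedBound_succ_le (s r : ℕ) :
    2 * mixedBound s (r + 1) ≤ 5 * mixedBound s r :=
  mixedBound_add_two_right s r ▸ two_mul_mixedBound_le s (r + 1)

theorem four_mul_mixedBound_le (s r : ℕ) : 4 * mixedBound s r ≤ mixedBound (s + 1) r := by
  induction s using Nat.twoStepInduction with
  | zero => exact (mixedBound_one_left r).ge
  | one =>
    rw [mixedBound_one_left, mixedBound_add_two_left]
    lia
  | more s ih _ =>
    have h₀ := mixedBound_add_two_left s r
    have h₁ := mixedBound_add_two_left (s + 1) r
    lia

theorem mixedBound_mono {s s' r r' : ℕ} (hs : s ≤ s') (hr : r ≤ r') :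
    mixedBound s r ≤ mixedBound s' r' := by
  have hleft : Monotone (mixedBound · r) := monotone_nat_of_le_succ fun s =>
    (Nat.le_mul_of_pos_left _ four_pos).trans (four_mul_mixedBound_le s r)
  have hright : Monotone (mixedBound s') := monotone_nat_of_le_succ fun r =>
    (Nat.le_mul_of_pos_left _ two_pos).trans (two_mul_mixedBound_le s' r)
  exact (hleft hs).trans (hright hr)

theorem mixedBound_pos (s r : ℕ) : 0 < mixedBound s r := by
  unfold mixedBound
  positivity

end Bound

section PendantEdge

variable {V : Type*} {G : SimpleGraph V}

theorem GH1_isContained {Q : Finset V} {u v : V} (hQ : G.IsNClique 4 Q) (hu : u ∈ Q) (hv : v ∉ Q)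
    (huv : G.Adj u v) : GH1 ⊑ G := by
  let e₀ : Fin 4 ≃ Q := (Q.equivFinOfCardEq hQ.card_eq).symm
  let e : Fin 4 ≃ Q := (Equiv.swap 3 (e₀.symm ⟨u, hu⟩)).trans e₀
  have he : (e 3 : V) = u := by simp [e]
  let f : Fin 5 → V := Fin.snoc (α := fun _ => V) (fun i : Fin 4 => (e i : V)) v
  have hf (i : Fin 4) : f i.castSucc = e i := Fin.snoc_castSucc (α := fun _ => V) ..
  have hf' : f (Fin.last 4) = v := Fin.snoc_last (α := fun _ => V) ..
  have hinj : Function.Injective f := Fin.snoc_injective_iff.2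
    ⟨Subtype.val_injective.comp e.injective, by rintro ⟨i, rfl⟩; exact hv (e i).2⟩
  have hpendant (i : Fin 4) (h : GH1.Adj i.castSucc (Fin.last 4)) : i = 3 := by
    revert i
    simp only [GH1]
    decide
  refine ⟨⟨⟨f, fun {a b} hab => ?_⟩, hinj⟩⟩
  induction a using Fin.lastCases with
  | last =>
    induction b using Fin.lastCases with
    | last => exact absurd rfl hab.ne
    | cast j =>
      rw [hf, hf', hpendant j hab.symm, he]
      exact huv.symm
  | cast i =>
    induction b using Fin.lastCases with
    | last =>
      rw [hf, hf', hpendant i hab, he]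
      exact huv
    | cast j =>
      rw [hf, hf]
      exact hQ.isClique (e i).2 (e j).2 (by simpa [Subtype.val_inj] using hab.ne)

theorem cliqueFree_four_of_free (hG : G.Preconnected) (hcard : 4 < Nat.card V)
    (hfree : GH1.Free G) : G.CliqueFree 4 := by
  intro Q hQ
  have hQc : (Qᶜ : Set V).Nonempty := by
    rw [Set.nonempty_compl]
    intro h
    rw [← Set.ncard_univ, ← h, Set.ncard_coe_finset, hQ.card_eq] at hcard
    exact lt_irrefl _ hcard
  obtain ⟨u, hu, v, hv, huv⟩ := preconnected_iff_forall_exists_adj.1 hG Q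
    (card_pos.1 (hQ.card_eq ▸ four_pos)) hQc
  exact hfree (GH1_isContained hQ hu hv huv)

end PendantEdge

namespace GallaiColoring

section Admissible

variable {V K : Type*} {c : GallaiColoring V K} {A B : Finset K} {i : K}

/-- Every edge of `c` has its color in `A ∪ B`, the colors in `A` avoid `GH1`, and the colors in `B`
avoid the triangle. -/
structure Admissible (c : GallaiColoring V K) (A B : Finset K) : Prop where
  mem_or_mem : ∀ {u v}, u ≠ v → c u v ∈ A ∨ c u v ∈ B
  free : ∀ i ∈ A, GH1.Free (c.graph i)
  cliqueFree : ∀ i ∈ B, (c.graph i).CliqueFree 3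

/-- The number of vertices of `c` obeys the bound given by `mixedBound`, for all palettes `A` and
`B` that are admissible for `c`. -/
def IsBounded (c : GallaiColoring V K) : Prop :=
  ∀ ⦃A B⦄, c.Admissible A B → Nat.card V ≤ mixedBound #A #B

/-- Colors without a triangle on `X` can be moved from `A` to `B`, and colors not occurring on `X`
can be dropped. -/
theorem Admissible.ncard_le [DecidableEq K] {X : Set V} (hc : c.Admissible A B)
    (hX : (c.induce X).IsBounded) {P T : Finset K}
    (hT : ∀ i ∈ T, (c.graph i).CliqueFreeOn X 3)
    (hP : ∀ i ∈ P, i ∉ T → (c.graph i).CliqueFreeOn X 2) {s r : ℕ} (hs : #(A \ P) ≤ s)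
    (hr : #(B \ P) + #T ≤ r) : X.ncard ≤ mixedBound s r := by
  refine (hX (A := A \ P) (B := B \ P ∪ T) ⟨?_, ?_, ?_⟩).trans
    (mixedBound_mono hs ((card_union_le _ _).trans hr))
  · intro u v huv
    have hP' : c u v ∈ P → c u v ∈ T := fun h => by
      by_contra huvT
      exact (cliqueFreeOn_two _).1 (hP _ h huvT) u.2 v.2 (Subtype.val_injective.ne huv)
        ⟨Subtype.val_injective.ne huv, rfl⟩
    have := hc.mem_or_mem (Subtype.val_injective.ne huv)
    simp only [comap_apply, Function.Embedding.subtype_apply, mem_sdiff, mem_union]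
    tauto
  · intro i hi
    rw [graph_comap]
    exact fun h => hc.free i (mem_sdiff.1 hi).1 (h.trans (Embedding.comap _ _).isContained)
  · intro i hi
    rw [graph_comap]
    rcases mem_union.1 hi with hi | hi
    · exact (hc.cliqueFree i (mem_sdiff.1 hi).1).comap (Embedding.comap _ _).isContained
    · exact (cliqueFree_induce_iff _ X 3).2 (hT i hi)

section Cut

variable [Finite V] {X : Set V} {x y : V}

theorem Admissible.card_le_of_join_of_mem_right (hc : c.Admissible A B) (hi : i ∈ B)
    (hXY : ∀ u ∈ X, ∀ v ∉ X, (c.graph i).Adj u v) (hx : x ∈ X) (hy : y ∉ X)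
    (hX : (c.induce X).IsBounded) (hX' : (c.induce Xᶜ).IsBounded) :
    Nat.card V ≤ mixedBound #A #B := by
  classical
  obtain ⟨hX₂, hX₂'⟩ := cliqueFreeOn_and_compl_of_join (hc.cliqueFree i hi) hXY hx hy
  have hle {Y : Set V} (hY : (c.induce Y).IsBounded) (hfree : (c.graph i).CliqueFreeOn Y 2) :
      Y.ncard ≤ mixedBound #A #(B.erase i) :=
    hc.ncard_le hY (P := {i}) (T := ∅) (by simp) (by simpa using hfree)
      (card_le_card sdiff_subset) (by simp [sdiff_singleton_eq_erase])
  have hbound := two_mul_mixedBound_le #A #(B.erase i)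
  rw [card_erase_add_one hi] at hbound
  rw [← Set.ncard_add_ncard_compl X]
  have h := hle hX hX₂
  have h' := hle hX' hX₂'
  lia

theorem Admissible.card_le_of_join_of_mem_left (hc : c.Admissible A B) (hi : i ∈ A)
    (hcard : 4 < Nat.card V) (hG : (c.graph i).Preconnected)
    (hXY : ∀ u ∈ X, ∀ v ∉ X, (c.graph i).Adj u v) (hx : x ∈ X) (hy : y ∉ X)
    (hX : (c.induce X).IsBounded) (hX' : (c.induce Xᶜ).IsBounded) :
    Nat.card V ≤ mixedBound #A #B := by
  classical
  have hfree : (c.graph i).CliqueFree 4 := cliqueFree_four_of_free hG hcard (hc.free i hi)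
  obtain ⟨hX₃, hX₃'⟩ := cliqueFreeOn_and_compl_of_join hfree hXY hx hy
  obtain ⟨s, hs⟩ : ∃ s, #A = s + 1 := Nat.exists_eq_add_one.2 (card_pos.2 ⟨i, hi⟩)
  have hs' : #(A \ {i}) ≤ s := by
    rw [sdiff_singleton_eq_erase, card_erase_of_mem hi, hs, Nat.add_sub_cancel]
  have hle {Y : Set V} (hY : (c.induce Y).IsBounded) (hfree : (c.graph i).CliqueFreeOn Y 3) :
      Y.ncard ≤ mixedBound s (#B + 1) :=
    hc.ncard_le hY (P := {i}) (T := {i}) (by simpa using hfree) (by simp) hs'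
      (Nat.add_le_add_right (card_le_card sdiff_subset) 1)
  have hle' {Y : Set V} (hY : (c.induce Y).IsBounded) (hfree : (c.graph i).CliqueFreeOn Y 2) :
      Y.ncard ≤ mixedBound s #B :=
    hc.ncard_le hY (P := {i}) (T := ∅) (by simp) (by simpa using hfree) hs'
      (card_le_card sdiff_subset)
  have hside : X.ncard ≤ mixedBound s #B ∨ Xᶜ.ncard ≤ mixedBound s #B := by
    by_cases hX₂ : (c.graph i).CliqueFreeOn X 2
    · exact .inl (hle' hX hX₂)
    · simp only [CliqueFreeOn, not_forall, not_not] at hX₂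
      obtain ⟨Q, hQX, hQ⟩ := hX₂
      exact .inr (hle' hX' (cliqueFreeOn_of_join (Q := Q) (by rwa [hQ.card_eq]) hQ.isClique
        fun q hq v hv => hXY q (hQX hq) v hv))
  have h := hle hX hX₃
  have h' := hle hX' hX₃'
  have hr := two_mul_mixedBound_succ_le s #B
  have hs := four_mul_mixedBound_le s #B
  rw [← Set.ncard_add_ncard_compl X]
  lia

theorem Admissible.card_le_of_not_preconnected_compl (hc : c.Admissible A B)
    (hA : A.Nonempty → 4 < Nat.card V) (ih : ∀ X : Set V, X ≠ Set.univ → (c.induce X).IsBounded)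
    (hi : ¬ (c.graph i)ᶜ.Preconnected) : Nat.card V ≤ mixedBound #A #B := by
  obtain ⟨X, ⟨x, hx⟩, ⟨y, hy⟩, hXY⟩ := exists_join_of_not_preconnected_compl hi
  have hX := ih X fun h => hy (h ▸ Set.mem_univ y)
  have hX' := ih Xᶜ fun h => (h ▸ Set.mem_univ x : x ∈ Xᶜ) hx
  have hxy := hXY x hx y hy
  rcases hxy.2 ▸ hc.mem_or_mem hxy.ne with hiA | hiB
  · have : Nonempty V := ⟨x⟩
    have hG := ((c.graph i).connected_or_preconnected_compl.resolve_right hi).preconnected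
    exact hc.card_le_of_join_of_mem_left hiA (hA ⟨i, hiA⟩) hG hXY hx hy hX hX'
  · exact hc.card_le_of_join_of_mem_right hiB hXY hx hy hX hX'

end Cut

end Admissible

end GallaiColoring

theorem sum_ncard_fiber {V ι : Type*} [Finite V] [Fintype ι] (p : V → ι) :
    ∑ x, (p ⁻¹' {x}).ncard = Nat.card V := by
  rw [← Nat.card_congr (Equiv.sigmaFiberEquiv p), Nat.card_sigma]
  exact sum_congr rfl fun x _ => (Nat.card_coe_set_eq _).symm

/-- Inside `X` there is a clique in the colors `a` and `b` whose size, up to the factor `W / D`,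
bounds the number of vertices of `X`. Cliques of this kind chosen in the parts of a Gallai partition
together form a clique, to which Ramsey bounds apply. -/
def GallaiColoring.IsCliqueBounded {V K : Type*} (c : GallaiColoring V K) (a b : K) (D W : ℕ)
    (X : Set V) : Prop :=
  ∃ t : Finset V, ↑t ⊆ X ∧ (c.graph a ⊔ c.graph b).IsClique t ∧ D * X.ncard ≤ W * #t

namespace GallaiColoring.IsGallaiPartition

variable {V ι K : Type*} {c : GallaiColoring V K} {p : V → ι} {a b : K}

protected theorem symm (hp : c.IsGallaiPartition p a b) : c.IsGallaiPartition p b a :=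
  ⟨hp.surjective, hp.color_eq, fun h => (hp.color_eq_or h).symm⟩

theorem exists_color_ne [Nontrivial ι] (hp : c.IsGallaiPartition p a b) {i : K}
    (hi : (c.graph i)ᶜ.Preconnected) (u : V) : ∃ v, p u ≠ p v ∧ c u v ≠ i := by
  obtain ⟨x, hx⟩ := exists_ne (p u)
  obtain ⟨w, rfl⟩ := hp.surjective x
  obtain ⟨s, hs, t, ht, hst⟩ :=
    preconnected_iff_forall_exists_adj.1 hi (p ⁻¹' {p u}) ⟨u, rfl⟩ ⟨w, hx⟩
  have hut : p u ≠ p t := fun h => ht h.symm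
  rw [Set.mem_preimage, Set.mem_singleton_iff] at hs
  exact ⟨t, hut, fun h => hst.2 ⟨hst.1, hp.color_eq hs.symm hut ▸ h⟩⟩

theorem exists_color_eq [Nontrivial ι] (hp : c.IsGallaiPartition p a b)
    (hb : (c.graph b)ᶜ.Preconnected) (u : V) : ∃ v, p u ≠ p v ∧ c u v = a := by
  obtain ⟨v, huv, hcolor⟩ := hp.exists_color_ne hb u
  exact ⟨v, huv, (hp.color_eq_or huv).resolve_right hcolor⟩

theorem ne [Nontrivial ι] (hp : c.IsGallaiPartition p a b) (hb : (c.graph b)ᶜ.Preconnected) :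
    a ≠ b := by
  rintro rfl
  obtain ⟨x⟩ := (inferInstance : Nonempty ι)
  obtain ⟨u, -⟩ := hp.surjective x
  obtain ⟨v, huv, hcolor⟩ := hp.exists_color_ne hb u
  exact hcolor ((or_self_iff).1 (hp.color_eq_or huv))

theorem preconnected_graph [Nontrivial ι] (hp : c.IsGallaiPartition p a b)
    (hb : (c.graph b)ᶜ.Preconnected) : (c.graph a).Preconnected := by
  refine preconnected_iff_forall_exists_adj.2 fun X hX hX' => ?_
  obtain ⟨s, hs, t, ht, hst⟩ := preconnected_iff_forall_exists_adj.1 hb X hX hX'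
  by_cases hpst : p s = p t
  · obtain ⟨v, hsv, hcolor⟩ := hp.exists_color_eq hb s
    by_cases hv : v ∈ X
    · refine ⟨v, hv, t, ht, Adj.symm ⟨?_, hp.color_eq hpst hsv ▸ hcolor⟩⟩
      exact fun h => ht (h ▸ hv)
    · exact ⟨s, hs, v, hv, ne_of_apply_ne p hsv, hcolor⟩
  · exact ⟨s, hs, t, ht, hst.1,
      (hp.color_eq_or hpst).resolve_right fun h => hst.2 ⟨hst.1, h⟩⟩

theorem cliqueFreeOn_fiber [Nontrivial ι] (hp : c.IsGallaiPartition p a b)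
    (hb : (c.graph b)ᶜ.Preconnected) {m : ℕ} (hm : (c.graph a).CliqueFree (m + 1)) (x : ι) :
    (c.graph a).CliqueFreeOn (p ⁻¹' {x}) m := by
  obtain ⟨u, rfl⟩ := hp.surjective x
  obtain ⟨v, huv, hcolor⟩ := hp.exists_color_eq hb u
  refine cliqueFreeOn_of_join (Q := {v}) hm (by simp) ?_
  simp only [mem_singleton, Set.mem_preimage, Set.mem_singleton_iff, forall_eq]
  exact fun w hw => Adj.symm
    ⟨ne_of_apply_ne p (hw ▸ huv), hp.color_eq hw.symm huv ▸ hcolor⟩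

theorem exists_isClique_transversal (hp : c.IsGallaiPartition p a b) {I : Finset ι} {D W : ℕ}
    (h : ∀ x ∈ I, c.IsCliqueBounded a b D W (p ⁻¹' {x})) :
    ∃ T : Finset V, (∀ v ∈ T, p v ∈ I) ∧ (c.graph a ⊔ c.graph b).IsClique T ∧
      D * ∑ x ∈ I, (p ⁻¹' {x}).ncard ≤ W * #T := by
  classical
  choose! t ht hclique hcard using h
  have hdisj : (I : Set ι).PairwiseDisjoint t := fun x hx y hy hxy =>
    Finset.disjoint_left.2 fun v hvx hvy => hxy ((ht x hx hvx).symm.trans (ht y hy hvy))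
  refine ⟨I.biUnion t, ?_, ?_, ?_⟩
  · intro v hv
    obtain ⟨x, hx, hvx⟩ := mem_biUnion.1 hv
    exact (ht x hx hvx : p v = x).symm ▸ hx
  · intro u hu v hv huv
    obtain ⟨x, hx, hux⟩ := mem_biUnion.1 hu
    obtain ⟨y, hy, hvy⟩ := mem_biUnion.1 hv
    obtain rfl : p u = x := ht x hx hux
    obtain rfl : p v = y := ht y hy hvy
    by_cases hpuv : p u = p v
    · exact hclique _ hx hux (hpuv ▸ hvy) huv
    · exact (hp.color_eq_or hpuv).imp (⟨huv, ·⟩) (⟨huv, ·⟩)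
  · rw [card_biUnion hdisj, mul_sum, mul_sum]
    exact sum_le_sum hcard

theorem card_add_two_le_of_notMem_fiber (hp : c.IsGallaiPartition p a b) {m n s t N₁ N₂ : ℕ} {x : ι}
    (h₁ : IsRamseyBound m (n + t) N₁) (h₂ : IsRamseyBound (m + s) n N₂)
    (ha : (c.graph a).CliqueFree (m + s)) (hb : (c.graph b).CliqueFree (n + t)) {Q R T : Finset V}
    (hQ : (c.graph a).IsNClique s Q) (hQx : ↑Q ⊆ p ⁻¹' {x}) (hR : (c.graph b).IsNClique t R)
    (hRx : ↑R ⊆ p ⁻¹' {x}) (hT : (c.graph a ⊔ c.graph b).IsClique T) (hTx : ∀ v ∈ T, p v ≠ x) :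
    #T + 2 ≤ N₁ + N₂ := by
  classical
  obtain ⟨u, rfl⟩ := hp.surjective x
  have hjoin {i : K} {S : Finset V} (hS : ↑S ⊆ p ⁻¹' {p u}) :
      ∀ q ∈ S, ∀ v ∈ {v | p u ≠ p v ∧ c u v = i}, (c.graph i).Adj q v := by
    rintro q hq v ⟨huv, hcolor⟩
    have hqu : p q = p u := hS hq
    exact ⟨ne_of_apply_ne p (hqu ▸ huv), hp.color_eq hqu.symm huv ▸ hcolor⟩
  have hlt₁ : #{v ∈ T | c u v = a} < N₁ := by
    refine h₁.card_lt (hT.subset (coe_subset.2 (filter_subset _ _))) ?_ hb.cliqueFreeOn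
    refine CliqueFreeOn.subset _ (fun v hv => ?_)
      (cliqueFreeOn_of_join (by rwa [hQ.card_eq]) hQ.isClique (hjoin hQx))
    obtain ⟨hvT, hcolor⟩ := mem_filter.1 hv
    exact ⟨(hTx v hvT).symm, hcolor⟩
  have hlt₂ : #{v ∈ T | ¬ c u v = a} < N₂ := by
    refine h₂.card_lt (hT.subset (coe_subset.2 (filter_subset _ _))) ha.cliqueFreeOn ?_
    refine CliqueFreeOn.subset _ (fun v hv => ?_)
      (cliqueFreeOn_of_join (by rwa [hR.card_eq]) hR.isClique (hjoin hRx))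
    obtain ⟨hvT, hcolor⟩ := mem_filter.1 hv
    exact ⟨(hTx v hvT).symm, (hp.color_eq_or (hTx v hvT).symm).resolve_left hcolor⟩
  have hcard := card_filter_add_card_filter_not (s := T) (c u · = a)
  lia

variable [Finite V]

theorem mul_card_le (hp : c.IsGallaiPartition p a b) {m n N D W : ℕ}
    (hN : IsRamseyBound m n (N + 1)) (ha : (c.graph a).CliqueFree m)
    (hb : (c.graph b).CliqueFree n) (h : ∀ x, c.IsCliqueBounded a b D W (p ⁻¹' {x})) :
    D * Nat.card V ≤ W * N := by
  have : Finite ι := .of_surjective p hp.surjective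
  have := Fintype.ofFinite ι
  obtain ⟨T, -, hT, hcard⟩ := hp.exists_isClique_transversal (I := univ) fun x _ => h x
  rw [sum_ncard_fiber] at hcard
  exact hcard.trans (Nat.mul_le_mul_left W
    (Nat.lt_succ_iff.1 (hN.card_lt hT ha.cliqueFreeOn hb.cliqueFreeOn)))

theorem mul_card_le_of_fiber (hp : c.IsGallaiPartition p a b) {m n s t N₁ N₂ D W : ℕ} {x : ι}
    (h₁ : IsRamseyBound m (n + t) (N₁ + 1)) (h₂ : IsRamseyBound (m + s) n (N₂ + 1))
    (ha : (c.graph a).CliqueFree (m + s)) (hb : (c.graph b).CliqueFree (n + t)) {Q R : Finset V}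
    (hQ : (c.graph a).IsNClique s Q) (hQx : ↑Q ⊆ p ⁻¹' {x}) (hR : (c.graph b).IsNClique t R)
    (hRx : ↑R ⊆ p ⁻¹' {x}) (h : ∀ y ≠ x, c.IsCliqueBounded a b D W (p ⁻¹' {y})) :
    D * Nat.card V ≤ D * (p ⁻¹' {x}).ncard + W * (N₁ + N₂) := by
  classical
  have : Finite ι := .of_surjective p hp.surjective
  have := Fintype.ofFinite ι
  obtain ⟨T, hTx, hT, hcard⟩ := hp.exists_isClique_transversal (I := univ.erase x) fun y hy =>
    h y (ne_of_mem_erase hy)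
  have hTN := hp.card_add_two_le_of_notMem_fiber h₁ h₂ ha hb hQ hQx hR hRx hT fun v hv =>
    ne_of_mem_erase (hTx v hv)
  rw [← sum_ncard_fiber p, ← add_sum_erase _ _ (mem_univ x), mul_add]
  exact Nat.add_le_add_left (hcard.trans (Nat.mul_le_mul_left W (by lia))) _

end GallaiColoring.IsGallaiPartition

namespace GallaiColoring

section PartBounded

variable {V K : Type*} {c : GallaiColoring V K} {a b : K} {X : Set V} {D W w : ℕ}

theorem IsCliqueBounded.symm (h : c.IsCliqueBounded a b D W X) : c.IsCliqueBounded b a D W X := by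
  rwa [IsCliqueBounded, sup_comm]

theorem isCliqueBounded_of_nonempty (hX : X.Nonempty) (h : D * X.ncard ≤ W) :
    c.IsCliqueBounded a b D W X := by
  obtain ⟨u, hu⟩ := hX
  exact ⟨{u}, by simpa, by simp, by simpa⟩

theorem exists_isNClique_two (h : ¬ (c.graph a).CliqueFreeOn X 2) :
    ∃ Q : Finset V, ↑Q ⊆ X ∧ (c.graph a).IsNClique 2 Q := by
  simpa only [CliqueFreeOn, not_forall, not_not, exists_prop] using h

theorem isCliqueBounded_of_not_cliqueFreeOn_two (ha : ¬ (c.graph a).CliqueFreeOn X 2)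
    (h : D * X.ncard ≤ W * 2) : c.IsCliqueBounded a b D W X := by
  obtain ⟨Q, hQX, hQ⟩ := exists_isNClique_two ha
  exact ⟨Q, hQX, hQ.isClique.mono le_sup_left, by rwa [hQ.card_eq]⟩

/-- The bounds on the size of a part of a Gallai partition when both reduced colors `a` and `b`
avoid `GH1`. The number `w` bounds the order of colorings in which neither `a` nor `b` occurs. -/
structure IsPartBounded (c : GallaiColoring V K) (a b : K) (w : ℕ) (X : Set V) : Prop where
  ncard_le : X.ncard ≤ 5 * w
  two_mul_ncard_le : (c.graph a).CliqueFreeOn X 2 ∨ (c.graph b).CliqueFreeOn X 2 →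
    2 * X.ncard ≤ 5 * w
  ncard_le_of_cliqueFreeOn : (c.graph a).CliqueFreeOn X 2 → (c.graph b).CliqueFreeOn X 2 →
    X.ncard ≤ w

theorem IsPartBounded.symm (h : c.IsPartBounded a b w X) : c.IsPartBounded b a w X :=
  ⟨h.ncard_le, fun hfree => h.two_mul_ncard_le hfree.symm,
    fun hb ha => h.ncard_le_of_cliqueFreeOn ha hb⟩

theorem IsPartBounded.isCliqueBounded (h : c.IsPartBounded a b w X) (hX : X.Nonempty)
    (hfree : (c.graph a).CliqueFreeOn X 2 ∨ (c.graph b).CliqueFreeOn X 2) :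
    c.IsCliqueBounded a b 4 (5 * w) X := by
  have hle := h.two_mul_ncard_le hfree
  by_cases ha : (c.graph a).CliqueFreeOn X 2
  · by_cases hb : (c.graph b).CliqueFreeOn X 2
    · have hw := h.ncard_le_of_cliqueFreeOn ha hb
      exact isCliqueBounded_of_nonempty hX (by lia)
    · exact (isCliqueBounded_of_not_cliqueFreeOn_two hb (by lia)).symm
  · exact isCliqueBounded_of_not_cliqueFreeOn_two ha (by lia)

theorem Admissible.isPartBounded [DecidableEq K] {A B : Finset K} (hc : c.Admissible A B)
    (hX : (c.induce X).IsBounded) (ha : (c.graph a).CliqueFreeOn X 3)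
    (hb : (c.graph b).CliqueFreeOn X 3) :
    c.IsPartBounded a b (mixedBound #(A \ {a, b}) #B) X := by
  have hle {T : Finset K} {r : ℕ} (hr : #B + #T ≤ r) (hT : T ⊆ {a, b})
      (haT : a ∉ T → (c.graph a).CliqueFreeOn X 2) (hbT : b ∉ T → (c.graph b).CliqueFreeOn X 2) :
      X.ncard ≤ mixedBound #(A \ {a, b}) r :=
    hc.ncard_le hX (P := {a, b}) (T := T) (by grind) (by grind) le_rfl
      ((Nat.add_le_add_right (card_le_card sdiff_subset) _).trans hr)
  refine ⟨?_, fun hfree => (Nat.mul_le_mul_left 2 ?_).trans (two_mul_mixedBound_succ_le _ _),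
    fun ha₂ hb₂ => hle (T := ∅) le_rfl (by simp) (fun _ => ha₂) (fun _ => hb₂)⟩
  · rw [← mixedBound_add_two_right]
    exact hle (T := {a, b}) (Nat.add_le_add_left card_le_two _) subset_rfl (by simp) (by simp)
  · rcases hfree with ha₂ | hb₂
    · exact hle (T := {b}) le_rfl (by simp) (fun _ => ha₂) (by simp)
    · exact hle (T := {a}) le_rfl (by simp) (by simp) (fun _ => hb₂)

end PartBounded

namespace IsGallaiPartition

variable {V ι K : Type*} {c : GallaiColoring V K} {p : V → ι} {a b : K} {w : ℕ} {x : ι}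

theorem nonempty_fiber (hp : c.IsGallaiPartition p a b) (x : ι) : (p ⁻¹' {x}).Nonempty :=
  (Set.singleton_nonempty x).preimage hp.surjective

theorem fiber_ne_univ [Nontrivial ι] (hp : c.IsGallaiPartition p a b) (x : ι) :
    p ⁻¹' {x} ≠ Set.univ := by
  obtain ⟨y, hy⟩ := exists_ne x
  obtain ⟨v, rfl⟩ := hp.surjective y
  exact fun h => hy (h ▸ Set.mem_univ v : v ∈ p ⁻¹' {x})

theorem cliqueFreeOn_fiber_of_color_eq (hp : c.IsGallaiPartition p a b) {i : K} {u v : V}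
    (huv : p u ≠ p v) (hcolor : c u v = i) (hi : (c.graph i).CliqueFree 4)
    (hu : ¬ (c.graph i).CliqueFreeOn (p ⁻¹' {p u}) 2) :
    (c.graph i).CliqueFreeOn (p ⁻¹' {p v}) 2 := by
  obtain ⟨Q, hQu, hQ⟩ := exists_isNClique_two hu
  refine cliqueFreeOn_of_join (Q := Q) (by rwa [hQ.card_eq]) hQ.isClique fun q hq z hz => ?_
  have hqu : p q = p u := hQu hq
  have hzv : p z = p v := hz
  have hqv : p q ≠ p v := hqu ▸ huv
  refine ⟨ne_of_apply_ne p (hzv ▸ hqv), ?_⟩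
  rw [c.color_comm, hp.color_eq hzv (hzv ▸ hqv.symm), c.color_comm, hp.color_eq hqu hqv, hcolor]

variable [Finite V]

theorem card_le_of_forall_cliqueFreeOn (hp : c.IsGallaiPartition p a b)
    (ha : (c.graph a).CliqueFree 4) (hb : (c.graph b).CliqueFree 4)
    (h : ∀ x, c.IsPartBounded a b w (p ⁻¹' {x}))
    (ha₂ : ∀ x, (c.graph a).CliqueFreeOn (p ⁻¹' {x}) 2)
    (hb₂ : ∀ x, (c.graph b).CliqueFreeOn (p ⁻¹' {x}) 2) : Nat.card V ≤ 17 * w := by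
  have hcard := hp.mul_card_le (D := 1) (W := w) isRamseyBound_four_four ha hb fun x =>
    isCliqueBounded_of_nonempty (hp.nonempty_fiber x)
      (by simpa using (h x).ncard_le_of_cliqueFreeOn (ha₂ x) (hb₂ x))
  lia

theorem card_le_of_not_cliqueFreeOn (hp : c.IsGallaiPartition p a b)
    (ha : (c.graph a).CliqueFree 4) (hb : (c.graph b).CliqueFree 4)
    (h : ∀ x, c.IsPartBounded a b w (p ⁻¹' {x}))
    (hax : ¬ (c.graph a).CliqueFreeOn (p ⁻¹' {x}) 2)
    (hbx : ¬ (c.graph b).CliqueFreeOn (p ⁻¹' {x}) 2) : Nat.card V ≤ 17 * w := by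
  obtain ⟨Q, hQx, hQ⟩ := exists_isNClique_two hax
  obtain ⟨R, hRx, hR⟩ := exists_isNClique_two hbx
  have hother (y : ι) (hyx : y ≠ x) : (c.graph a).CliqueFreeOn (p ⁻¹' {y}) 2 ∨
      (c.graph b).CliqueFreeOn (p ⁻¹' {y}) 2 := by
    obtain ⟨u, rfl⟩ := hp.surjective x
    obtain ⟨v, rfl⟩ := hp.surjective y
    exact (hp.color_eq_or hyx.symm).imp
      (fun h => hp.cliqueFreeOn_fiber_of_color_eq hyx.symm h ha hax)
      (fun h => hp.cliqueFreeOn_fiber_of_color_eq hyx.symm h hb hbx)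
  have hcard := hp.mul_card_le_of_fiber (isRamseyBound_two 4) (isRamseyBound_two 4).symm
    ha hb hQ hQx hR hRx fun y hyx =>
      (h y).isCliqueBounded (hp.nonempty_fiber y) (hother y hyx)
  have hx := (h x).ncard_le
  lia

theorem card_le_of_forall_cliqueFreeOn_or (hp : c.IsGallaiPartition p a b)
    (ha : (c.graph a).CliqueFree 4) (hb : (c.graph b).CliqueFree 4)
    (h : ∀ x, c.IsPartBounded a b w (p ⁻¹' {x}))
    (hfree : ∀ x, (c.graph a).CliqueFreeOn (p ⁻¹' {x}) 2 ∨ (c.graph b).CliqueFreeOn (p ⁻¹' {x}) 2)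
    (hax : ¬ (c.graph a).CliqueFreeOn (p ⁻¹' {x}) 2) : Nat.card V ≤ 17 * w := by
  obtain ⟨Q, hQx, hQ⟩ := exists_isNClique_two hax
  obtain ⟨u, hu⟩ := hp.nonempty_fiber x
  have hcard := hp.mul_card_le_of_fiber (t := 1) (R := {u}) (isRamseyBound_two 4)
    isRamseyBound_three_four.symm ha hb hQ hQx (by simp) (by simpa using hu) fun y _ =>
      (h y).isCliqueBounded (hp.nonempty_fiber y) (hfree y)
  have hx := (h x).two_mul_ncard_le (hfree x)
  lia

theorem card_le_of_forall_isPartBounded (hp : c.IsGallaiPartition p a b)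
    (ha : (c.graph a).CliqueFree 4) (hb : (c.graph b).CliqueFree 4)
    (h : ∀ x, c.IsPartBounded a b w (p ⁻¹' {x})) : Nat.card V ≤ 17 * w := by
  by_cases! hfree : ∃ x, ¬ (c.graph a).CliqueFreeOn (p ⁻¹' {x}) 2 ∧
      ¬ (c.graph b).CliqueFreeOn (p ⁻¹' {x}) 2
  · obtain ⟨x, hax, hbx⟩ := hfree
    exact hp.card_le_of_not_cliqueFreeOn ha hb h hax hbx
  have hor (x : ι) := or_iff_not_imp_left.2 (hfree x)
  by_cases! ha₂ : ∃ x, ¬ (c.graph a).CliqueFreeOn (p ⁻¹' {x}) 2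
  · exact hp.card_le_of_forall_cliqueFreeOn_or ha hb h hor ha₂.choose_spec
  by_cases! hb₂ : ∃ x, ¬ (c.graph b).CliqueFreeOn (p ⁻¹' {x}) 2
  · exact hp.symm.card_le_of_forall_cliqueFreeOn_or hb ha (fun x => (h x).symm)
      (fun x => (hor x).symm) hb₂.choose_spec
  exact hp.card_le_of_forall_cliqueFreeOn ha hb h ha₂ hb₂

end IsGallaiPartition

section Partition

variable {V ι K : Type*} {c : GallaiColoring V K} {A B : Finset K} {p : V → ι} {a b : K}
  [Finite V] [Nontrivial ι]

theorem Admissible.card_le_of_mem_right_of_mem_right (hc : c.Admissible A B)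
    (hp : c.IsGallaiPartition p a b) (ha : (c.graph a)ᶜ.Preconnected)
    (hb : (c.graph b)ᶜ.Preconnected) (ih : ∀ x, (c.induce (p ⁻¹' {x})).IsBounded) (haB : a ∈ B)
    (hbB : b ∈ B) : Nat.card V ≤ mixedBound #A #B := by
  classical
  have hB : #(B \ {a, b}) + 2 = #B := by
    rw [← card_pair (hp.ne hb), card_sdiff_add_card_eq_card (by grind)]
  have hfiber (x : ι) : (p ⁻¹' {x}).ncard ≤ mixedBound #A #(B \ {a, b}) := by
    refine hc.ncard_le (ih x) (P := {a, b}) (T := ∅) (by simp) ?_ (card_le_card sdiff_subset) le_rfl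
    simp only [mem_insert, mem_singleton, forall_eq_or_imp, forall_eq]
    exact ⟨fun _ => hp.cliqueFreeOn_fiber hb (hc.cliqueFree a haB) x,
      fun _ => hp.symm.cliqueFreeOn_fiber ha (hc.cliqueFree b hbB) x⟩
  have hcard := hp.mul_card_le (D := 1) isRamseyBound_three_three (hc.cliqueFree a haB)
    (hc.cliqueFree b hbB) fun x => isCliqueBounded_of_nonempty (hp.nonempty_fiber x)
      (by simpa using hfiber x)
  have hw := mixedBound_add_two_right #A #(B \ {a, b})
  rw [hB] at hw
  lia

theorem Admissible.card_le_of_mem_left_of_mem_right (hc : c.Admissible A B)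
    (hp : c.IsGallaiPartition p a b) (ha : (c.graph a)ᶜ.Preconnected)
    (hb : (c.graph b)ᶜ.Preconnected) (ih : ∀ x, (c.induce (p ⁻¹' {x})).IsBounded)
    (hcard : 4 < Nat.card V) (haA : a ∈ A) (hbB : b ∈ B) : Nat.card V ≤ mixedBound #A #B := by
  classical
  have ha₄ := cliqueFree_four_of_free (hp.preconnected_graph hb) hcard (hc.free a haA)
  have hb₃ := hc.cliqueFree b hbB
  have hA : #(A \ {a, b}) ≤ #(A.erase a) := card_le_card (by grind)
  have hB : #(B \ {a, b}) ≤ #(B.erase b) := card_le_card (by grind)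
  have hfiber (x : ι) : c.IsCliqueBounded a b 2 (mixedBound #(A.erase a) #B) (p ⁻¹' {x}) := by
    have hbx := hp.symm.cliqueFreeOn_fiber ha hb₃ x
    by_cases hax : (c.graph a).CliqueFreeOn (p ⁻¹' {x}) 2
    · refine isCliqueBounded_of_nonempty (hp.nonempty_fiber x) ?_
      have hle := hc.ncard_le (ih x) (P := {a, b}) (T := ∅) (by simp) (by grind) hA hB
      have hr := two_mul_mixedBound_le #(A.erase a) #(B.erase b)
      rw [card_erase_add_one hbB] at hr
      lia
    · have hle := hc.ncard_le (ih x) (P := {a, b}) (T := {a})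
        (by simpa using hp.cliqueFreeOn_fiber hb ha₄ x) (by grind) hA (Nat.add_le_add_right hB 1)
      rw [card_erase_add_one hbB] at hle
      exact isCliqueBounded_of_not_cliqueFreeOn_two hax (by lia)
  have hV := hp.mul_card_le isRamseyBound_three_four.symm ha₄ hb₃ hfiber
  have hs := four_mul_mixedBound_le #(A.erase a) #B
  rw [card_erase_add_one haA] at hs
  lia

theorem Admissible.card_le_of_mem_left_of_mem_left (hc : c.Admissible A B)
    (hp : c.IsGallaiPartition p a b) (ha : (c.graph a)ᶜ.Preconnected)
    (hb : (c.graph b)ᶜ.Preconnected) (ih : ∀ x, (c.induce (p ⁻¹' {x})).IsBounded)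
    (hcard : 4 < Nat.card V) (haA : a ∈ A) (hbA : b ∈ A) : Nat.card V ≤ mixedBound #A #B := by
  classical
  have ha₄ := cliqueFree_four_of_free (hp.preconnected_graph hb) hcard (hc.free a haA)
  have hb₄ := cliqueFree_four_of_free (hp.symm.preconnected_graph ha) hcard (hc.free b hbA)
  have hA : #(A \ {a, b}) + 2 = #A := by
    rw [← card_pair (hp.ne hb), card_sdiff_add_card_eq_card (by grind)]
  rw [← hA, mixedBound_add_two_left]
  exact hp.card_le_of_forall_isPartBounded ha₄ hb₄ fun x => hc.isPartBounded (ih x)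
    (hp.cliqueFreeOn_fiber hb ha₄ x) (hp.symm.cliqueFreeOn_fiber ha hb₄ x)

theorem Admissible.card_le_of_isGallaiPartition (hc : c.Admissible A B)
    (hp : c.IsGallaiPartition p a b) (ha : (c.graph a)ᶜ.Preconnected)
    (hb : (c.graph b)ᶜ.Preconnected) (ih : ∀ x, (c.induce (p ⁻¹' {x})).IsBounded)
    (hA : A.Nonempty → 4 < Nat.card V) : Nat.card V ≤ mixedBound #A #B := by
  have hmem {a b : K} (hp : c.IsGallaiPartition p a b) (hb : (c.graph b)ᶜ.Preconnected) :
      a ∈ A ∨ a ∈ B := by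
    obtain ⟨x⟩ := (inferInstance : Nonempty ι)
    obtain ⟨u, -⟩ := hp.nonempty_fiber x
    obtain ⟨v, huv, rfl⟩ := hp.exists_color_eq hb u
    exact hc.mem_or_mem (ne_of_apply_ne p huv)
  rcases hmem hp hb, hmem hp.symm ha with ⟨haA | haB, hbA | hbB⟩
  · exact hc.card_le_of_mem_left_of_mem_left hp ha hb ih (hA ⟨a, haA⟩) haA hbA
  · exact hc.card_le_of_mem_left_of_mem_right hp ha hb ih (hA ⟨a, haA⟩) haA hbB
  · exact hc.card_le_of_mem_left_of_mem_right hp.symm hb ha ih (hA ⟨b, hbA⟩) hbA haB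
  · exact hc.card_le_of_mem_right_of_mem_right hp ha hb ih haB hbB

end Partition

theorem isBounded {V : Type u} {K : Type*} [Finite V] (c : GallaiColoring V K) : c.IsBounded := by
  induction hn : Nat.card V using Nat.strong_induction_on generalizing V with
  | _ n ih =>
    intro A B hc
    subst hn
    have hsub (X : Set V) (hX : X ≠ Set.univ) : (c.induce X).IsBounded := by
      refine ih _ ?_ _ rfl
      rw [Nat.card_coe_set_eq, ← Set.ncard_univ]
      exact Set.ncard_lt_ncard (Set.ssubset_univ_iff.2 hX)
    by_cases hA : A.Nonempty → 4 < Nat.card V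
    · by_cases! hcut : ∃ i, ¬ (c.graph i)ᶜ.Preconnected
      · exact hc.card_le_of_not_preconnected_compl hA hsub hcut.choose_spec
      rcases subsingleton_or_nontrivial V with hV | hV
      · exact Finite.card_le_one_iff_subsingleton.2 hV |>.trans (mixedBound_pos _ _)
      obtain ⟨ι, hι, p, a, b, hp⟩ := c.exists_isGallaiPartition
      exact hc.card_le_of_isGallaiPartition hp (hcut a) (hcut b)
        (fun x => hsub _ (hp.fiber_ne_univ x)) hA
    · push Not at hA
      calc Nat.card V ≤ mixedBound 1 0 := hA.2
        _ ≤ mixedBound #A #B := mixedBound_mono (card_pos.2 hA.1) (Nat.zero_le _)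

end GallaiColoring

section LowerBound

namespace GallaiColoring

variable {V W K L : Type*}

/-- The two-coloring of a complete graph in which the edges of `G` have color `0` and those of its
complement have color `1`. -/
def ofGraph (G : SimpleGraph V) [DecidableRel G.Adj] : GallaiColoring V (Fin 2) where
  color u v := if G.Adj u v then 0 else 1
  color_comm u v := by simp only [G.adj_comm]
  gallai u v w := by grind

theorem graph_ofGraph_zero (G : SimpleGraph V) [DecidableRel G.Adj] : (ofGraph G).graph 0 = G := by
  ext u v
  simpa [graph_adj, ofGraph] using Adj.ne

theorem graph_ofGraph_one (G : SimpleGraph V) [DecidableRel G.Adj] :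
    (ofGraph G).graph 1 = Gᶜ := by
  ext u v
  simp [graph_adj, ofGraph]

/-- The coloring with its colors renamed along a bijection. -/
def relabel (c : GallaiColoring V K) (e : K ≃ L) : GallaiColoring V L where
  color u v := e (c u v)
  color_comm u v := congrArg e (c.color_comm u v)
  gallai u v w := by simpa only [e.apply_eq_iff_eq] using c.gallai u v w

theorem graph_relabel (c : GallaiColoring V K) (e : K ≃ L) (i : L) :
    (c.relabel e).graph i = c.graph (e.symm i) := by
  ext u v
  exact and_congr_right fun _ => (Equiv.eq_symm_apply e).symm

/-- The lexicographic product: every vertex of `c` is replaced by a copy of `d`, and the two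
palettes are kept disjoint. -/
def lex [DecidableEq V] (c : GallaiColoring V K) (d : GallaiColoring W L) :
    GallaiColoring (V × W) (K ⊕ L) where
  color p q := if p.1 = q.1 then .inr (d p.2 q.2) else .inl (c p.1 q.1)
  color_comm p q := by simp only [eq_comm (a := p.1), c.color_comm p.1, d.color_comm p.2]
  gallai p q r := by
    have hc := c.gallai p.1 q.1 r.1
    have hd := d.gallai p.2 q.2 r.2
    have hcomm := c.color_comm p.1 q.1
    grind

variable [DecidableEq V] {c : GallaiColoring V K} {d : GallaiColoring W L}

theorem graph_lex_inl_adj {i : K} {p q : V × W} :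
    ((c.lex d).graph (.inl i)).Adj p q ↔ (c.graph i).Adj p.1 q.1 := by
  simp only [graph_adj, lex]
  grind

theorem graph_lex_inr_adj {j : L} {p q : V × W} :
    ((c.lex d).graph (.inr j)).Adj p q ↔ p.1 = q.1 ∧ (d.graph j).Adj p.2 q.2 := by
  simp only [graph_adj, lex]
  grind

theorem completeGraph_isContained_of_graph_lex_inl {ι : Type*} {i : K}
    (h : completeGraph ι ⊑ (c.lex d).graph (.inl i)) : completeGraph ι ⊑ c.graph i := by
  obtain ⟨f⟩ := h
  let g : completeGraph ι →g c.graph i :=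
    ⟨Prod.fst ∘ f, fun hab => graph_lex_inl_adj.1 (f.toHom.map_adj hab)⟩
  exact ⟨⟨g, g.injective_of_top_hom⟩⟩

theorem isContained_of_graph_lex_inr {α : Type*} {F : SimpleGraph α} (hF : F.Preconnected) {j : L}
    (h : F ⊑ (c.lex d).graph (.inr j)) : F ⊑ d.graph j := by
  obtain ⟨f⟩ := h
  have hadj {x y : α} (hxy : F.Adj x y) := graph_lex_inr_adj.1 (f.toHom.map_adj hxy)
  have hfst (x y : α) : (f x).1 = (f y).1 := by
    obtain ⟨p⟩ := hF x y
    induction p with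
    | nil => rfl
    | cons hxy _ ih => exact (hadj hxy).1.trans ih
  exact ⟨⟨⟨Prod.snd ∘ f, fun hxy => (hadj hxy).2⟩,
    fun x y hxy => f.injective (Prod.ext (hfst x y) hxy)⟩⟩

end GallaiColoring

/-- Some Gallai coloring of the complete graph on `V` with colors in `K` has no monochromatic copy
of `F`. -/
def IsGallaiAvoidable {α : Type*} (F : SimpleGraph α) (V K : Type*) : Prop :=
  ∃ c : GallaiColoring V K, ∀ i, F.Free (c.graph i)

namespace IsGallaiAvoidable

variable {α V W K L : Type*} {F : SimpleGraph α}

theorem of_embedding (h : IsGallaiAvoidable F V K) (f : W ↪ V) (e : K ≃ L) :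
    IsGallaiAvoidable F W L := by
  obtain ⟨c, hc⟩ := h
  refine ⟨(c.comap f).relabel e, fun i hi => hc (e.symm i) ?_⟩
  rw [GallaiColoring.graph_relabel, GallaiColoring.graph_comap] at hi
  exact hi.trans (Embedding.comap f _).isContained

theorem of_isContained {β : Type*} {F' : SimpleGraph β} (h : IsGallaiAvoidable F V K)
    (hF : F ⊑ F') : IsGallaiAvoidable F' V K := by
  obtain ⟨c, hc⟩ := h
  exact ⟨c, fun i hi => hc i (hF.trans hi)⟩

theorem prod {ι : Type*} (h : IsGallaiAvoidable (completeGraph ι) V K)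
    (h' : IsGallaiAvoidable F W L) (hF : F.Preconnected) (hι : completeGraph ι ⊑ F) :
    IsGallaiAvoidable F (V × W) (K ⊕ L) := by
  classical
  obtain ⟨c, hc⟩ := h
  obtain ⟨d, hd⟩ := h'
  refine ⟨c.lex d, Sum.forall.2 ⟨fun i hi => hc i ?_, fun j hj => hd j ?_⟩⟩
  · exact GallaiColoring.completeGraph_isContained_of_graph_lex_inl (hι.trans hi)
  · exact GallaiColoring.isContained_of_graph_lex_inr hF hj

end IsGallaiAvoidable

/-- The Paley graph of order `17`, whose jumps are the quadratic residues `±1, ±2, ±4, ±8`. -/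
def paley17 : SimpleGraph (ZMod 17) :=
  circulantGraph ↑({1, 2, 4, 8} : Finset (ZMod 17))

instance : DecidableRel paley17.Adj :=
  inferInstanceAs (DecidableRel (circulantGraph _).Adj)

theorem paley17_adj_sub {x y z : ZMod 17} :
    paley17.Adj (x - z) (y - z) ↔ paley17.Adj x y := by
  simp [paley17]

theorem cliqueFree_four_paley17 : paley17.CliqueFree 4 := by
  have h : ∀ x, paley17.Adj 0 x → ∀ y, paley17.Adj 0 y → paley17.Adj x y →
      ∀ z, paley17.Adj 0 z → paley17.Adj x z → ¬ paley17.Adj y z := by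
    decide +kernel
  rw [cliqueFree_iff]
  refine ⟨fun f => ?_⟩
  have hf (i j : Fin 4) (hij : i ≠ j) : paley17.Adj (f i - f 0) (f j - f 0) :=
    paley17_adj_sub.2 (f.toHom.map_adj hij)
  have hf₀ (i : Fin 4) (hi : i ≠ 0) : paley17.Adj 0 (f i - f 0) := by
    simpa only [sub_self] using hf 0 i hi.symm
  exact h _ (hf₀ 1 (by decide)) _ (hf₀ 2 (by decide)) (hf 1 2 (by decide))
    _ (hf₀ 3 (by decide)) (hf 1 3 (by decide)) (hf 2 3 (by decide))

/-- Multiplication by the non-residue `3` exchanges the Paley graph and its complement. -/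
theorem paley17_compl_isContained : paley17ᶜ ⊑ paley17 := by
  have h : ∀ x y, paley17ᶜ.Adj x y → paley17.Adj (3 * x) (3 * y) := by decide +kernel
  have hinj : Function.Injective fun x : ZMod 17 => 3 * x := by decide
  exact ⟨⟨⟨_, h _ _⟩, hinj⟩⟩

theorem isGallaiAvoidable_completeGraph_four :
    IsGallaiAvoidable (completeGraph (Fin 4)) (ZMod 17) (Fin 2) := by
  have hpaley : (completeGraph (Fin 4)).Free paley17 := fun h =>
    h.not_cliqueFree cliqueFree_four_paley17
  refine ⟨.ofGraph paley17, Fin.forall_fin_two.2 ⟨?_, ?_⟩⟩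
  · rwa [GallaiColoring.graph_ofGraph_zero]
  · rw [GallaiColoring.graph_ofGraph_one]
    exact fun h => hpaley (h.trans paley17_compl_isContained)

theorem completeGraph_four_isContained_GH1 : completeGraph (Fin 4) ⊑ GH1 := by
  have h : ∀ i j : Fin 4, i ≠ j → GH1.Adj i.castSucc j.castSucc := by
    simp only [GH1]
    decide
  exact ⟨⟨⟨Fin.castSucc, h _ _⟩, Fin.castSucc_injective 4⟩⟩

theorem GH1_preconnected : GH1.Preconnected := by
  have h : ∀ x, x ≠ 3 → GH1.Adj x 3 := by
    simp only [GH1]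
    decide
  have h₃ (x : Fin 5) : GH1.Reachable x 3 := by
    rcases eq_or_ne x 3 with rfl | hx
    exacts [.rfl, (h x hx).reachable]
  exact fun x y => (h₃ x).trans (h₃ y).symm

theorem isGallaiAvoidable_GH1 (k : ℕ) :
    IsGallaiAvoidable GH1 (Fin (mixedBound (k + 1) 0)) (Fin (k + 1)) := by
  induction k using Nat.twoStepInduction with
  | zero =>
    let c : GallaiColoring (Fin 4) (Fin 1) := ⟨fun _ _ => 0, fun _ _ => rfl, fun _ _ _ => .inl rfl⟩
    refine ⟨c, fun i ⟨f⟩ => ?_⟩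
    exact absurd (Fintype.card_le_of_injective f f.injective) (by decide)
  | one =>
    exact isGallaiAvoidable_completeGraph_four.of_isContained completeGraph_four_isContained_GH1
  | more k ih _ =>
    have hprod := isGallaiAvoidable_completeGraph_four.prod ih GH1_preconnected
      completeGraph_four_isContained_GH1
    have e : Fin (mixedBound (k + 3) 0) ≃ ZMod 17 × Fin (mixedBound (k + 1) 0) :=
      (finCongr (mixedBound_add_two_left (k + 1) 0)).trans finProdFinEquiv.symm
    exact hprod.of_embedding e.toEmbedding (finSumFinEquiv.trans (finCongr (by lia)))

end LowerBound

section GallaiRamseyNumber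

variable {α : Type} {F : SimpleGraph α} {n k : ℕ}

theorem GallaiColoring.isGallaiColoring (c : GallaiColoring (Fin n) (Fin k)) :
    IsGallaiColoring c := by
  refine ⟨c.color_comm, ?_⟩
  rintro ⟨u, v, w, -, -, -, huv, huw, hvw⟩
  rcases c.gallai u v w with h | h | h <;> contradiction

theorem exists_gallaiColoring_of_isGallaiColoring {c : Fin n → Fin n → Fin k}
    (hc : IsGallaiColoring c) : ∃ d : GallaiColoring (Fin n) (Fin k), d.color = c := by
  refine ⟨⟨c, hc.1, fun u v w => ?_⟩, rfl⟩
  by_contra! h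
  refine hc.2 ⟨u, v, w, ?_, ?_, ?_, h⟩
  · rintro rfl
    exact h.2.2 rfl
  · rintro rfl
    exact h.2.1 (hc.1 u v)
  · rintro rfl
    exact h.1 rfl

theorem hasMonoCopy_iff (c : GallaiColoring (Fin n) (Fin k)) (i : Fin k) :
    HasMonoCopy F c i ↔ F ⊑ c.graph i := by
  constructor
  · rintro ⟨f, hf, hcolor⟩
    exact ⟨⟨⟨f, fun h => ⟨hf.ne h.ne, hcolor _ _ h⟩⟩, hf⟩⟩
  · rintro ⟨f⟩
    exact ⟨f, f.injective, fun x y h => (f.toHom.map_adj h).2⟩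

theorem isGallaiAvoidable_iff : IsGallaiAvoidable F (Fin n) (Fin k) ↔
    ∃ c : Fin n → Fin n → Fin k, IsGallaiColoring c ∧ ∀ i, ¬ HasMonoCopy F c i := by
  constructor
  · rintro ⟨c, hc⟩
    exact ⟨c, c.isGallaiColoring, fun i hi => hc i ((hasMonoCopy_iff c i).1 hi)⟩
  · rintro ⟨c, hc, hF⟩
    obtain ⟨d, rfl⟩ := exists_gallaiColoring_of_isGallaiColoring hc
    exact ⟨d, fun i hi => hF i ((hasMonoCopy_iff d i).2 hi)⟩

theorem GR_eq_succ (h : IsGallaiAvoidable F (Fin n) (Fin k))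
    (h' : ¬ IsGallaiAvoidable F (Fin (n + 1)) (Fin k)) :
    GR k (fun _ => ⟨α, F⟩) = n + 1 := by
  have hmem (m : ℕ) : (∀ c : Fin m → Fin m → Fin k, IsGallaiColoring c →
      ∃ i, HasMonoCopy F c i) ↔ ¬ IsGallaiAvoidable F (Fin m) (Fin k) := by
    simp only [isGallaiAvoidable_iff, not_exists, not_and, not_forall, not_not]
  refine IsLeast.csInf_eq ⟨(hmem _).2 h', fun m hm => ?_⟩
  by_contra! hmn
  exact (hmem m).1 hm (h.of_embedding (Fin.castLEEmb (Nat.lt_succ_iff.1 hmn)) (.refl _))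

theorem card_le_mixedBound {V K : Type*} [Finite V] [Fintype K] (h : IsGallaiAvoidable GH1 V K) :
    Nat.card V ≤ mixedBound (Fintype.card K) 0 := by
  obtain ⟨c, hc⟩ := h
  exact c.isBounded (A := univ) (B := ∅) ⟨by simp, fun i _ => hc i, by simp⟩

theorem GR_GH1 (hk : 1 ≤ k) : GR k (fun _ => ⟨Fin 5, GH1⟩) = mixedBound k 0 + 1 := by
  obtain ⟨k, rfl⟩ := Nat.exists_eq_add_of_le' hk
  refine GR_eq_succ (isGallaiAvoidable_GH1 k) fun h => ?_
  simpa using card_le_mixedBound h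

end GallaiRamseyNumber

end GallaiRamsey

/-- Theorem 1.3 (case H = H₁): for every `k ≥ 1`, `GR_k(H₁)` equals `17^(k/2) + 1`
when `k` is even, and `4·17^((k-1)/2) + 1` when `k` is odd. -/
theorem GR_H1_value (k : ℕ) (hk : 1 ≤ k) :
    (Even k → GR k (fun _ => ⟨Fin 5, GH1⟩) = 17 ^ (k / 2) + 1) ∧
    (Odd k → GR k (fun _ => ⟨Fin 5, GH1⟩) = 4 * 17 ^ ((k - 1) / 2) + 1) := by
  rw [GallaiRamsey.GR_GH1 hk]
  constructor
  · rintro ⟨m, rfl⟩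
    simp [GallaiRamsey.mixedBound, ← two_mul]
  · rintro ⟨m, rfl⟩
    simp [GallaiRamsey.mixedBound, Nat.mul_add_div two_pos, mul_comm 4]
end

section
/- For every integer k ≥ 1: if k is even, then GR_k(H2) = 17^(k/2) + 1, and if k is odd, then GR_k(H2) = 4·17^((k−1)/2) + 1. -/
open SimpleGraph

/-!
Lower bound: both colours of the Paley colouring of the complete graph on `ℤ/17ℤ` are `K₄`-free, so
no homomorphism maps `H₂` into either of them. Substituting a Gallai colouring without monochromatic
`H₂` for every vertex therefore gives another one, with `17` times as many vertices and two more
colours.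

Upper bound: let `p` colours avoid `H₂` and let `q` further colours avoid triangles. By strong
induction the order is at most `maxOrder p q`. A Gallai colouring is either a join of two smaller
colourings in a single colour, or has a partition into homogeneous parts, joined in two colours `r`
and `b` that both occur at every part. In a join in colour `i` both sides lose the paw in colour
`i`, and at least one side usually loses all triangles or edges in it. In a partition whose parts
contain no edges of colours `r` and `b`, a transversal is a two-coloured complete graph, of order at
most `17`, `8` or `5` by Ramsey-type arguments. If instead a part `X` contains such an edge, then
the vertices outside `X` form its common neighbourhoods in `r` and `b`, and the edge forces those to
be small.
-/

namespace GallaiRamsey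

open Finset

section LocalClique

variable {V : Type*} {G H : SimpleGraph V} {S X Y : Finset V} {n m d : ℕ} {y : V}

/-- `G` contains no `n`-clique inside `S` with `d` of its vertices adjacent to a further vertex
of `S`. With `(n, d) = (4, 2)` this excludes the graph `H₂`, and with `(3, 1)` the paw. -/
def CliqueExtFreeOn (G : SimpleGraph V) (S : Finset V) (n d : ℕ) : Prop :=
  ∀ ⦃K T : Finset V⦄, K ⊆ S → G.IsNClique n K → T ⊆ K → #T = d →
    ∀ t ∈ S, t ∉ K → ¬ ∀ x ∈ T, G.Adj t x

theorem CliqueExtFreeOn.subset (h : CliqueExtFreeOn G S n d) (hXS : X ⊆ S) :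
    CliqueExtFreeOn G X n d :=
  fun _ _ hK hKn hT hTd t ht ↦ h (hK.trans hXS) hKn hT hTd t (hXS ht)

theorem exists_isNClique_of_not_cliqueFreeOn (h : ¬ G.CliqueFreeOn S n) :
    ∃ K ⊆ S, G.IsNClique n K := by
  simpa [CliqueFreeOn] using h

theorem cliqueFreeOn_subset (h : G.CliqueFreeOn S n) (hXS : X ⊆ S) : G.CliqueFreeOn X n :=
  CliqueFreeOn.subset G (coe_subset.2 hXS) h

theorem cliqueFreeOn_two_iff : G.CliqueFreeOn S 2 ↔ ∀ x ∈ S, ∀ y ∈ S, ¬ G.Adj x y := by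
  rw [cliqueFreeOn_two]
  exact ⟨fun h x hx y hy hxy ↦ h hx hy hxy.ne hxy, fun h x hx y hy _ ↦ h x hx y hy⟩

theorem cliqueFreeOn_of_adj (hS : G.CliqueFreeOn S (n + 1)) (hy : y ∈ S) (hXS : X ⊆ S)
    (hX : ∀ x ∈ X, G.Adj y x) : G.CliqueFreeOn X n :=
  CliqueFreeOn.subset G (Set.subset_inter (coe_subset.2 hXS) hX) (CliqueFreeOn.of_succ G hS hy)

theorem cliqueExtFreeOn_of_adj (hS : CliqueExtFreeOn G S (n + 1) (d + 1)) (hy : y ∈ S)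
    (hXS : X ⊆ S) (hX : ∀ x ∈ X, G.Adj y x) : CliqueExtFreeOn G X n d := by
  classical
  intro K T hK hKn hTK hTd t ht htK hadj
  have hyX : y ∉ X := fun hyX ↦ G.irrefl (hX y hyX)
  refine hS (insert_subset hy (hK.trans hXS)) (hKn.insert fun x hx ↦ hX x (hK hx))
    (insert_subset_insert y hTK) ?_ t (hXS ht) ?_ ?_
  · rw [card_insert_of_notMem fun hyT ↦ hyX (hK (hTK hyT)), hTd]
  · simpa [htK] using fun hty : t = y ↦ hyX (hty ▸ ht)
  · simpa using ⟨(hX t ht).symm, hadj⟩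

theorem cliqueFreeOn_succ_of_cliqueExtFreeOn (hS : CliqueExtFreeOn G S n d) (hdn : d ≤ n) :
    G.CliqueFreeOn S (n + 1) := by
  classical
  intro K hK hKn
  obtain ⟨t, ht⟩ : K.Nonempty := card_pos.1 (by rw [hKn.card_eq]; lia)
  have hKt : G.IsNClique n (K.erase t) := hKn.erase_of_mem ht
  obtain ⟨T, hTK, hTd⟩ := exists_subset_card_eq (hdn.trans hKt.card_eq.ge)
  refine hS ((erase_subset t K).trans (coe_subset.1 hK)) hKt hTK hTd t (hK ht)
    (notMem_erase t K) fun x hx ↦ ?_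
  obtain ⟨hxt, hxK⟩ := mem_erase.1 (hTK hx)
  exact hKn.isClique ht hxK hxt.symm

theorem cliqueFreeOn_or_of_isCompleteBetween (hS : CliqueExtFreeOn G S (n + m) d) (hdn : d ≤ n)
    (hXS : X ⊆ S) (hYS : Y ⊆ S) (hXY : G.IsCompleteBetween X Y) (hm : m < #Y) :
    G.CliqueFreeOn X n ∨ G.CliqueFreeOn Y m := by
  classical
  by_contra! hcon
  obtain ⟨K, hKX, hK⟩ := exists_isNClique_of_not_cliqueFreeOn hcon.1
  obtain ⟨L, hLY, hL⟩ := exists_isNClique_of_not_cliqueFreeOn hcon.2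
  obtain ⟨t, ht, htL⟩ := exists_mem_notMem_of_card_lt_card (hL.card_eq ▸ hm)
  obtain ⟨T, hTK, hT⟩ := exists_subset_card_eq (hdn.trans hK.card_eq.ge)
  have hdisj : Disjoint X Y := disjoint_coe.1 hXY.disjoint
  refine hS (union_subset (hKX.trans hXS) (hLY.trans hYS)) ⟨?_, ?_⟩
    (hTK.trans subset_union_left) hT t (hYS ht) ?_ fun x hx ↦ (hXY (hKX (hTK hx)) ht).symm
  · have := G.symm
    rw [coe_union, IsClique, Set.pairwise_union_of_symm]
    exact ⟨hK.isClique, hL.isClique, fun x hx y hy _ ↦ hXY (hKX hx) (hLY hy)⟩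
  · rw [card_union_of_disjoint (hdisj.mono hKX hLY), hK.card_eq, hL.card_eq]
  · simpa [htL] using fun htK ↦ disjoint_left.1 hdisj (hKX htK) ht

theorem exists_subset_cliqueFreeOn_two_sdiff [DecidableEq V] (h : CliqueExtFreeOn G S (n + 1) 1) :
    ∃ M ⊆ S, G.CliqueFreeOn M 2 ∧ G.CliqueFreeOn ↑(S \ M) (n + 1) := by
  classical
  obtain ⟨M, hM⟩ :=
    {M ∈ S.powerset | ∀ x ∈ M, ∀ y ∈ M, ¬ G.Adj x y}.exists_maximal ⟨∅, by simp⟩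
  obtain ⟨hMS, hM2⟩ : M ⊆ S ∧ ∀ x ∈ M, ∀ y ∈ M, ¬ G.Adj x y := by simpa using hM.prop
  refine ⟨M, hMS, cliqueFreeOn_two_iff.2 hM2, fun K hK hKn ↦ ?_⟩
  rw [coe_subset, subset_sdiff] at hK
  obtain ⟨x, hx⟩ : K.Nonempty := card_pos.1 (by rw [hKn.card_eq]; lia)
  obtain ⟨t, ht, htx⟩ : ∃ t ∈ M, G.Adj t x := by
    by_contra! hcon
    have hins : insert x M ∈ {M ∈ S.powerset | ∀ x ∈ M, ∀ y ∈ M, ¬ G.Adj x y} := by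
      have hxM (y) (hy : y ∈ M) : ¬ G.Adj x y := fun h ↦ hcon y hy h.symm
      simpa [insert_subset_iff, hK.1 hx, hMS, hxM] using ⟨hxM, fun y hy ↦ ⟨hcon y hy, hM2 y hy⟩⟩
    have hxM : x ∈ M := hM.le_of_ge hins (subset_insert x M) (mem_insert_self x M)
    exact disjoint_left.1 hK.2 hx hxM
  exact h hK.1 hKn (singleton_subset_iff.2 hx) (card_singleton x) t (hMS ht)
    (disjoint_right.1 hK.2 ht) (by simpa using htx)

end LocalClique

section Homogeneous

variable {V : Type*} {G H : SimpleGraph V} {S T X : Finset V} {v : V}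

open Classical in
/-- The common `G`-neighbours in `S` of all vertices of `X`; the neighbourhood of `v` in `S` is
`commonNbrs G S {v}`. -/
noncomputable def commonNbrs (G : SimpleGraph V) (S X : Finset V) : Finset V :=
  {v ∈ S | ∀ x ∈ X, G.Adj x v}

@[simp] theorem mem_commonNbrs : v ∈ commonNbrs G S X ↔ v ∈ S ∧ ∀ x ∈ X, G.Adj x v := by
  simp [commonNbrs]

theorem commonNbrs_subset : commonNbrs G S X ⊆ S := fun _ hv ↦ (mem_commonNbrs.1 hv).1

theorem commonNbrs_mono (hTS : T ⊆ S) : commonNbrs G T X ⊆ commonNbrs G S X :=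
  fun _ hv ↦ mem_commonNbrs.2 ⟨hTS (commonNbrs_subset hv), (mem_commonNbrs.1 hv).2⟩

theorem isCompleteBetween_commonNbrs : G.IsCompleteBetween X (commonNbrs G S X) :=
  fun _ hx _ hv ↦ (mem_commonNbrs.1 hv).2 _ hx

/-- `X` is homogeneous in `S` for the pair `G`, `H` (a module, in a two-coloured complete graph):
every vertex of `S` outside `X` sees `X` entirely through `G` or entirely through `H`. -/
def IsHomogeneous (G H : SimpleGraph V) (S X : Finset V) : Prop :=
  ∀ v ∈ S, v ∉ X → (∀ x ∈ X, G.Adj x v) ∨ ∀ x ∈ X, H.Adj x v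

theorem IsHomogeneous.symm (h : IsHomogeneous G H S X) : IsHomogeneous H G S X :=
  fun v hv hvX ↦ (h v hv hvX).symm

theorem isHomogeneous_singleton (hS : (G ⊔ H).IsClique S) (hv : v ∈ S) :
    IsHomogeneous G H S {v} := by
  intro w hw hwv
  simpa using hS hv hw (Ne.symm (by simpa using hwv))

theorem IsHomogeneous.card_le (h : IsHomogeneous G H S X) :
    #S ≤ #X + #(commonNbrs G S X) + #(commonNbrs H S X) := by
  classical
  have hsub : S ⊆ X ∪ commonNbrs G S X ∪ commonNbrs H S X := by
    intro v hv
    by_cases hvX : v ∈ X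
    · simp [hvX]
    · rcases h v hv hvX with hG | hH
      · exact mem_union_left _ (mem_union_right _ (mem_commonNbrs.2 ⟨hv, hG⟩))
      · exact mem_union_right _ (mem_commonNbrs.2 ⟨hv, hH⟩)
  exact (card_le_card hsub).trans <| (card_union_le _ _).trans <|
    Nat.add_le_add_right (card_union_le _ _) _

end Homogeneous

section Ramsey

variable {V : Type*} {G H : SimpleGraph V} {S T K : Finset V} {n d : ℕ} {v : V}

theorem isClique_sup_symm (hS : (G ⊔ H).IsClique S) : (H ⊔ G).IsClique S :=
  sup_comm G H ▸ hS

theorem isClique_subset (hS : G.IsClique S) (hT : T ⊆ S) : G.IsClique T :=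
  IsClique.subset (coe_subset.2 hT) hS

theorem card_le_nbrs (hS : (G ⊔ H).IsClique S) (hv : v ∈ S) :
    #S ≤ 1 + #(commonNbrs G S {v}) + #(commonNbrs H S {v}) := by
  simpa using (isHomogeneous_singleton hS hv).card_le

theorem card_le_nbrs_of_notMem (hS : (G ⊔ H).IsClique S) (hv : v ∈ S) (hKS : K ⊆ S)
    (hvK : v ∉ K) : #K ≤ #(commonNbrs G K {v}) + #(commonNbrs H K {v}) := by
  classical
  rw [← card_union_add_card_inter]
  refine le_add_right (card_le_card fun x hx ↦ ?_)
  simpa [hx] using hS hv (hKS hx) (ne_of_mem_of_not_mem hx hvK).symm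

theorem sum_card_nbrs_comm (G : SimpleGraph V) (K T : Finset V) :
    ∑ t ∈ T, #(commonNbrs G K {t}) = ∑ k ∈ K, #(commonNbrs G T {k}) := by
  classical
  simpa [commonNbrs, bipartiteAbove, bipartiteBelow, G.adj_comm] using
    sum_card_bipartiteAbove_eq_sum_card_bipartiteBelow (s := T) (t := K) G.Adj

theorem cliqueFreeOn_nbrs (hS : G.CliqueFreeOn S (n + 1)) (hv : v ∈ S) :
    G.CliqueFreeOn (commonNbrs G S {v}) n :=
  cliqueFreeOn_of_adj hS hv commonNbrs_subset fun _ hx ↦ (mem_commonNbrs.1 hx).2 v (by simp)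

theorem card_nbrs_lt_of_cliqueExtFreeOn (hS : CliqueExtFreeOn G S n d) (hKS : K ⊆ S)
    (hK : G.IsNClique n K) (hv : v ∈ S) (hvK : v ∉ K) : #(commonNbrs G K {v}) < d := by
  by_contra! hd
  obtain ⟨T, hT, hTd⟩ := exists_subset_card_eq hd
  exact hS hKS hK (hT.trans commonNbrs_subset) hTd v hv hvK fun x hx ↦
    (mem_commonNbrs.1 (hT hx)).2 v (mem_singleton_self v)

theorem even_card_of_odd_nbrs (h : ∀ v ∈ S, Odd #(commonNbrs G S {v})) : Even #S := by
  classical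
  have hdeg (v : S) : (G.induce (S : Set V)).degree v = #(commonNbrs G S {v.1}) := by
    rw [← card_neighborFinset_eq_degree, ← card_map (Function.Embedding.subtype _)]
    congr 1
    ext w
    simp [and_comm]
  simpa [hdeg, h] using (G.induce (S : Set V)).even_card_odd_degree_vertices

theorem card_lt_of_cliqueFreeOn_two (hS : (G ⊔ H).IsClique S) (hG : G.CliqueFreeOn S n)
    (hH : H.CliqueFreeOn S 2) : #S < n := by
  by_contra! hn
  obtain ⟨K, hKS, hK⟩ := exists_subset_card_eq hn
  refine hG (coe_subset.2 hKS) ⟨fun x hx y hy hxy ↦ ?_, hK⟩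
  exact (hS (hKS hx) (hKS hy) hxy).resolve_right
    (cliqueFreeOn_two_iff.1 hH x (hKS hx) y (hKS hy))

theorem card_le_five_of_cliqueFreeOn (hS : (G ⊔ H).IsClique S) (hG : G.CliqueFreeOn S 3)
    (hH : H.CliqueFreeOn S 3) : #S ≤ 5 := by
  obtain rfl | ⟨v, hv⟩ := S.eq_empty_or_nonempty
  · simp
  have hGv : #(commonNbrs G S {v}) < 3 :=
    card_lt_of_cliqueFreeOn_two (isClique_sup_symm (isClique_subset hS commonNbrs_subset))
      (cliqueFreeOn_subset hH commonNbrs_subset) (cliqueFreeOn_nbrs hG hv)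
  have hHv : #(commonNbrs H S {v}) < 3 :=
    card_lt_of_cliqueFreeOn_two (isClique_subset hS commonNbrs_subset)
      (cliqueFreeOn_subset hG commonNbrs_subset) (cliqueFreeOn_nbrs hH hv)
  have := card_le_nbrs hS hv
  lia

theorem card_le_eight_of_cliqueFreeOn (hS : (G ⊔ H).IsClique S) (hG : G.CliqueFreeOn S 3)
    (hH : H.CliqueFreeOn S 4) : #S ≤ 8 := by
  by_contra! hcard
  have hdeg (v) (hv : v ∈ S) : #(commonNbrs G S {v}) = 3 ∧ #S = 9 := by
    have hGv : #(commonNbrs G S {v}) < 4 :=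
      card_lt_of_cliqueFreeOn_two (isClique_sup_symm (isClique_subset hS commonNbrs_subset))
        (cliqueFreeOn_subset hH commonNbrs_subset) (cliqueFreeOn_nbrs hG hv)
    have hHv : #(commonNbrs H S {v}) ≤ 5 :=
      card_le_five_of_cliqueFreeOn (isClique_subset hS commonNbrs_subset)
        (cliqueFreeOn_subset hG commonNbrs_subset) (cliqueFreeOn_nbrs hH hv)
    have := card_le_nbrs hS hv
    lia
  obtain ⟨v, hv⟩ : S.Nonempty := card_pos.1 (by lia)
  have heven : Even #S := even_card_of_odd_nbrs fun w hw ↦ by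
    rw [(hdeg w hw).1]
    decide
  rw [(hdeg v hv).2] at heven
  exact absurd heven (by decide)

theorem card_le_seventeen_of_cliqueFreeOn (hS : (G ⊔ H).IsClique S) (hG : G.CliqueFreeOn S 4)
    (hH : H.CliqueFreeOn S 4) : #S ≤ 17 := by
  obtain rfl | ⟨v, hv⟩ := S.eq_empty_or_nonempty
  · simp
  have hGv : #(commonNbrs G S {v}) ≤ 8 :=
    card_le_eight_of_cliqueFreeOn (isClique_subset hS commonNbrs_subset) (cliqueFreeOn_nbrs hG hv)
      (cliqueFreeOn_subset hH commonNbrs_subset)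
  have hHv : #(commonNbrs H S {v}) ≤ 8 :=
    card_le_eight_of_cliqueFreeOn (isClique_sup_symm (isClique_subset hS commonNbrs_subset))
      (cliqueFreeOn_nbrs hH hv) (cliqueFreeOn_subset hG commonNbrs_subset)
  have := card_le_nbrs hS hv
  lia

theorem card_le_eight_of_cliqueExtFreeOn (hS : (G ⊔ H).IsClique S) (hG : CliqueExtFreeOn G S 4 2)
    (hH : H.CliqueFreeOn S 3) : #S ≤ 8 := by
  classical
  by_cases hG4 : G.CliqueFreeOn S 4
  · exact card_le_eight_of_cliqueFreeOn (isClique_sup_symm hS) hH hG4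
  obtain ⟨K, hKS, hK⟩ := exists_isNClique_of_not_cliqueFreeOn hG4
  have hH2 : H.CliqueFreeOn ↑(S \ K) 2 := by
    rw [cliqueFreeOn_two_iff]
    intro s hs t ht hst
    rw [mem_sdiff] at hs ht
    have hsK := card_nbrs_lt_of_cliqueExtFreeOn hG hKS hK hs.1 hs.2
    have htK := card_nbrs_lt_of_cliqueExtFreeOn hG hKS hK ht.1 ht.2
    have hcover : K ⊆ commonNbrs G K {s} ∪ commonNbrs G K {t} := by
      intro x hx
      by_contra hcon
      have hxs := hS hs.1 (hKS hx) (ne_of_mem_of_not_mem hx hs.2).symm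
      have hxt := hS ht.1 (hKS hx) (ne_of_mem_of_not_mem hx ht.2).symm
      simp only [mem_union, mem_commonNbrs, mem_singleton, forall_eq, hx, true_and,
        not_or] at hcon
      refine hH (t := {s, t, x}) ?_ (is3Clique_triple_iff.2
        ⟨hst, hxs.resolve_left hcon.1, hxt.resolve_left hcon.2⟩)
      simp [Set.insert_subset_iff, hs.1, ht.1, hKS hx]
    have := (card_le_card hcover).trans (card_union_le _ _)
    rw [hK.card_eq] at this
    lia
  have hO : #(S \ K) < 5 :=
    card_lt_of_cliqueFreeOn_two (isClique_subset hS sdiff_subset)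
      (cliqueFreeOn_subset (cliqueFreeOn_succ_of_cliqueExtFreeOn hG (by lia)) sdiff_subset) hH2
  have := card_sdiff_add_card_eq_card hKS
  rw [hK.card_eq] at this
  lia

theorem cliqueFreeOn_three_sdiff_of_cliqueExtFreeOn [DecidableEq V] (hS : (G ⊔ H).IsClique S)
    (hG : CliqueExtFreeOn G S 4 2) (hH : CliqueExtFreeOn H S 4 2) (hKS : K ⊆ S)
    (hK : G.IsNClique 4 K) : H.CliqueFreeOn ↑(S \ K) 3 := by
  intro T hT hT3
  rw [coe_subset, subset_sdiff] at hT
  have hTK (t) (ht : t ∈ T) : #(commonNbrs G K {t}) ≤ 1 :=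
    Nat.le_of_lt_succ <| card_nbrs_lt_of_cliqueExtFreeOn hG hKS hK (hT.1 ht)
      (disjoint_left.1 hT.2 ht)
  have hsum : ∑ k ∈ K, #(commonNbrs G T {k}) ≤ 3 := by
    rw [← sum_card_nbrs_comm, ← hT3.card_eq, card_eq_sum_ones]
    exact sum_le_sum hTK
  obtain ⟨k, hk, hkT⟩ : ∃ k ∈ K, #(commonNbrs G T {k}) < 1 :=
    exists_lt_of_sum_lt (by simpa [hK.card_eq] using Nat.lt_succ_of_le hsum)
  have hL : H.IsNClique 4 (insert k T) := by
    refine hT3.insert fun t ht ↦ (hS (hKS hk) (hT.1 ht) ?_).resolve_left fun hkt ↦ ?_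
    · exact ne_of_mem_of_not_mem hk (disjoint_left.1 hT.2 ht)
    · simp only [Nat.lt_one_iff, card_eq_zero] at hkT
      exact notMem_empty t (hkT ▸ mem_commonNbrs.2 ⟨ht, by simpa using hkt⟩)
  have hKL (x) (hx : x ∈ K.erase k) : 2 ≤ #(commonNbrs G T {x}) := by
    obtain ⟨hxk, hxK⟩ := mem_erase.1 hx
    have hxT : x ∉ T := disjoint_right.1 hT.2 hxK
    have hHL := card_nbrs_lt_of_cliqueExtFreeOn hH (insert_subset (hKS hk) hT.1) hL (hKS hxK)
      (by simp [hxk, hxT])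
    have hHT := card_le_card (commonNbrs_mono (G := H) (X := {x}) (subset_insert k T))
    have := card_le_nbrs_of_notMem hS (hKS hxK) hT.1 hxT
    rw [hT3.card_eq] at this
    lia
  have hsix : ∑ x ∈ K.erase k, 2 ≤ ∑ x ∈ K.erase k, #(commonNbrs G T {x}) := sum_le_sum hKL
  have := sum_le_sum_of_subset (f := fun x ↦ #(commonNbrs G T {x})) (erase_subset k K)
  rw [sum_const, card_erase_of_mem hk, hK.card_eq] at hsix
  lia

theorem card_le_twelve_of_isNClique (hS : (G ⊔ H).IsClique S) (hG : CliqueExtFreeOn G S 4 2)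
    (hH : CliqueExtFreeOn H S 4 2) (hKS : K ⊆ S) (hK : G.IsNClique 4 K) : #S ≤ 12 := by
  classical
  have hO : #(S \ K) ≤ 8 :=
    card_le_eight_of_cliqueExtFreeOn (isClique_subset hS sdiff_subset) (hG.subset sdiff_subset)
      (cliqueFreeOn_three_sdiff_of_cliqueExtFreeOn hS hG hH hKS hK)
  have := card_sdiff_add_card_eq_card hKS
  rw [hK.card_eq] at this
  lia

theorem card_le_seventeen_of_cliqueExtFreeOn (hS : (G ⊔ H).IsClique S)
    (hG : CliqueExtFreeOn G S 4 2) (hH : CliqueExtFreeOn H S 4 2) : #S ≤ 17 := by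
  by_cases hG4 : G.CliqueFreeOn S 4
  · by_cases hH4 : H.CliqueFreeOn S 4
    · exact card_le_seventeen_of_cliqueFreeOn hS hG4 hH4
    obtain ⟨K, hKS, hK⟩ := exists_isNClique_of_not_cliqueFreeOn hH4
    exact (card_le_twelve_of_isNClique (isClique_sup_symm hS) hH hG hKS hK).trans (by lia)
  obtain ⟨K, hKS, hK⟩ := exists_isNClique_of_not_cliqueFreeOn hG4
  exact (card_le_twelve_of_isNClique hS hG hH hKS hK).trans (by lia)

end Ramsey

section GallaiPartition

variable {V C : Type*} {c : Sym2 V → C} {r b i : C} {S X Y : Finset V} {u v w : V}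

/-- The graph of the edges of colour `i`. The values of `c` on the diagonal are irrelevant. -/
def colorGraph (c : Sym2 V → C) (i : C) : SimpleGraph V :=
  .fromEdgeSet (c ⁻¹' {i})

@[simp] theorem colorGraph_adj : (colorGraph c i).Adj u v ↔ c s(u, v) = i ∧ u ≠ v := by
  simp [colorGraph]

/-- An edge-colouring without rainbow triangles. Degenerate triples satisfy the condition
automatically, so distinctness of the vertices need not be required. -/
def IsGallai (c : Sym2 V → C) : Prop :=
  ∀ u v w, c s(u, v) = c s(u, w) ∨ c s(u, v) = c s(v, w) ∨ c s(u, w) = c s(v, w)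

/-- A proper nonempty part `X` of `S` all of whose edges to `S \ X` have colour `r` or `b`. -/
structure IsTwoColorCut (c : Sym2 V → C) (r b : C) (S X : Finset V) : Prop where
  nonempty : X.Nonempty
  ssubset : X ⊂ S
  color : ∀ x ∈ X, ∀ y ∈ S, y ∉ X → c s(x, y) = r ∨ c s(x, y) = b

/-- The graph on `S` of the edges with a colour different from `r` and `b`. -/
def otherColorGraph (c : Sym2 V → C) (r b : C) (S : Finset V) : SimpleGraph V where
  Adj u v := u ∈ S ∧ v ∈ S ∧ u ≠ v ∧ c s(u, v) ≠ r ∧ c s(u, v) ≠ b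
  symm := ⟨fun u v h ↦ by rw [Sym2.eq_swap]; tauto⟩
  loopless := ⟨by tauto⟩

theorem IsHomogeneous.color_eq_or (h : IsHomogeneous (colorGraph c r) (colorGraph c b) S X)
    (hu : u ∈ X) (hv : v ∈ S) (hvX : v ∉ X) : c s(u, v) = r ∨ c s(u, v) = b :=
  (h v hv hvX).imp (fun h ↦ (colorGraph_adj.1 (h u hu)).1) fun h ↦ (colorGraph_adj.1 (h u hu)).1

theorem IsHomogeneous.color_eq (h : IsHomogeneous (colorGraph c r) (colorGraph c b) S X)
    (hu : u ∈ X) (hw : w ∈ X) (hv : v ∈ S) (hvX : v ∉ X) : c s(u, v) = c s(w, v) := by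
  rcases h v hv hvX with h | h <;>
    exact (colorGraph_adj.1 (h u hu)).1.trans (colorGraph_adj.1 (h w hw)).1.symm

theorem IsTwoColorCut.mem_iff_of_reachable (h : IsTwoColorCut c r b S X)
    (huv : (otherColorGraph c r b S).Reachable u v) : u ∈ X ↔ v ∈ X := by
  obtain ⟨p⟩ := huv
  induction p with
  | nil => rfl
  | @cons x y z hxy _ ih =>
    obtain ⟨hx, hy, -, hr, hb⟩ := hxy
    rw [← ih]
    refine ⟨fun hxX ↦ ?_, fun hyX ↦ ?_⟩ <;> by_contra hcon
    · exact (h.color x hxX y hy hcon).elim hr hb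
    · rw [Sym2.eq_swap] at hr hb
      exact (h.color y hyX x hx hcon).elim hr hb

theorem color_eq_or_of_not_reachable (hu : u ∈ S) (hv : v ∈ S)
    (huv : ¬ (otherColorGraph c r b S).Reachable u v) : c s(u, v) = r ∨ c s(u, v) = b := by
  by_contra! hcon
  exact huv (Adj.reachable ⟨hu, hv, fun h ↦ huv (h ▸ .refl u), hcon.1, hcon.2⟩)

theorem IsGallai.color_eq_of_reachable (hc : IsGallai c)
    (huw : (otherColorGraph c r b S).Reachable u w) (hv : v ∈ S)
    (huv : ¬ (otherColorGraph c r b S).Reachable u v) : c s(u, v) = c s(w, v) := by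
  obtain ⟨p⟩ := huw
  induction p with
  | nil => rfl
  | @cons x y z hxy _ ih =>
    have hyv : ¬ (otherColorGraph c r b S).Reachable y v := fun h ↦ huv (hxy.reachable.trans h)
    rw [← ih hyv]
    have hxv' := color_eq_or_of_not_reachable hxy.1 hv huv
    have hyv' := color_eq_or_of_not_reachable hxy.2.1 hv hyv
    obtain ⟨-, -, -, hr, hb⟩ := hxy
    grind [hc x y v]

/-- Gallai's theorem: the components of the edges in the remaining colours are homogeneous. -/
theorem IsGallai.exists_finpartition [DecidableEq V] (hc : IsGallai c)
    (hX : IsTwoColorCut c r b S X) :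
    ∃ P : Finpartition S, 2 ≤ #P.parts ∧
      ∀ U ∈ P.parts, IsHomogeneous (colorGraph c r) (colorGraph c b) S U := by
  classical
  let P := Finpartition.ofSetSetoid (otherColorGraph c r b S).reachableSetoid S
  refine ⟨P, one_lt_card.2 ?_, fun U hU v hv hvU ↦ ?_⟩
  · obtain ⟨x, hx⟩ := hX.nonempty
    obtain ⟨y, hy, hyX⟩ := exists_of_ssubset hX.ssubset
    refine ⟨P.part x, P.part_mem.2 (hX.ssubset.1 hx), P.part y, P.part_mem.2 hy, fun hxy ↦ hyX ?_⟩
    have hyx : y ∈ P.part x := hxy ▸ P.mem_part hy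
    exact (hX.mem_iff_of_reachable
      ((Finpartition.mem_part_ofSetSetoid_iff_rel S).1 hyx).2.2).1 hx
  · obtain ⟨u, hu, rfl⟩ : ∃ u ∈ S, P.part u = U := by
      obtain ⟨u, hu⟩ := P.nonempty_of_mem_parts hU
      exact ⟨u, P.le hU hu, P.part_eq_of_mem hU hu⟩
    have huv : ¬ (otherColorGraph c r b S).Reachable u v := fun h ↦
      hvU ((Finpartition.mem_part_ofSetSetoid_iff_rel S).2 ⟨hu, hv, h⟩)
    have hcolor (x) (hx : x ∈ P.part u) : c s(u, v) = c s(x, v) :=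
      hc.color_eq_of_reachable ((Finpartition.mem_part_ofSetSetoid_iff_rel S).1 hx).2.2 hv huv
    have hne (x) (hx : x ∈ P.part u) : x ≠ v := ne_of_mem_of_not_mem hx hvU
    simp only [colorGraph_adj]
    refine (color_eq_or_of_not_reachable hu hv huv).imp ?_ ?_ <;>
      exact fun h x hx ↦ ⟨hcolor x hx ▸ h, hne x hx⟩

theorem IsGallai.exists_color_eq_of_forall_part [DecidableEq V] (hc : IsGallai c)
    {P : Finpartition S} (hP : 2 ≤ #P.parts)
    (hhom : ∀ U ∈ P.parts, IsHomogeneous (colorGraph c r) (colorGraph c b) S U)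
    (hv : ∀ U ∈ P.parts, ∃ u ∈ U, c s(v, u) ≠ r ∧ c s(v, u) ≠ b) :
    ∃ t, t ≠ r ∧ t ≠ b ∧ ∀ u ∈ S, c s(v, u) = r ∨ c s(v, u) = b ∨ c s(v, u) = t := by
  have hcross {U x y} (hU : U ∈ P.parts) (hx : x ∈ U) (hy : y ∈ S) (hyU : y ∉ U)
      (hvx : c s(v, x) ≠ r ∧ c s(v, x) ≠ b) (hvy : c s(v, y) ≠ r ∧ c s(v, y) ≠ b) :
      c s(v, x) = c s(v, y) := by
    have := (hhom U hU).color_eq_or hx hy hyU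
    grind [hc v x y]
  obtain ⟨U₁, hU₁, U₂, hU₂, hne⟩ := one_lt_card.1 hP
  obtain ⟨u₁, hu₁, hvu₁⟩ := hv U₁ hU₁
  obtain ⟨u₂, hu₂, hvu₂⟩ := hv U₂ hU₂
  have hu₂U₁ : u₂ ∉ U₁ := disjoint_right.1 (P.disjoint hU₁ hU₂ hne) hu₂
  refine ⟨c s(v, u₁), hvu₁.1, hvu₁.2, fun u hu ↦ ?_⟩
  by_contra! hcon
  have hvu : c s(v, u) ≠ r ∧ c s(v, u) ≠ b := ⟨hcon.1, hcon.2.1⟩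
  refine hcon.2.2 ?_
  by_cases huU₁ : u ∈ U₁
  · rw [hcross hU₁ huU₁ (P.le hU₂ hu₂) hu₂U₁ hvu hvu₂,
      hcross hU₁ hu₁ (P.le hU₂ hu₂) hu₂U₁ hvu₁ hvu₂]
  · exact (hcross hU₁ hu₁ hu huU₁ hvu₁ hvu).symm

theorem IsGallai.color_eq_of_mem_part [DecidableEq V] (hc : IsGallai c) {P : Finpartition S}
    (hhom : ∀ U ∈ P.parts, IsHomogeneous (colorGraph c r) (colorGraph c b) S U)
    {U W : Finset V} (hU : U ∈ P.parts) (hW : W ∈ P.parts) (hUW : U ≠ W) {x y z : V} (hx : x ∈ U)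
    (hz : z ∈ U) (hy : y ∈ W) (hw : w ∈ W) (hvwr : c s(v, w) ≠ r) (hvwb : c s(v, w) ≠ b)
    (hvwz : c s(v, w) ≠ c s(v, z)) : c s(x, y) = c s(v, z) := by
  have hdisj : Disjoint U W := P.disjoint hU hW hUW
  have hyU : y ∉ U := disjoint_right.1 hdisj hy
  have hzW : z ∉ W := disjoint_left.1 hdisj hz
  have hwz := (hhom W hW).color_eq_or hw (P.le hU hz) hzW
  calc c s(x, y) = c s(z, y) := (hhom U hU).color_eq hx hz (P.le hW hy) hyU
    _ = c s(y, z) := by rw [Sym2.eq_swap]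
    _ = c s(w, z) := (hhom W hW).color_eq hy hw (P.le hU hz) hzW
    _ = c s(v, z) := by grind [hc v w z]

theorem IsGallai.isTwoColorCut_sdiff_part [DecidableEq V] (hc : IsGallai c) (hvS : v ∉ S)
    {P : Finpartition S} (hP : 2 ≤ #P.parts)
    (hhom : ∀ U ∈ P.parts, IsHomogeneous (colorGraph c r) (colorGraph c b) S U)
    {t : C} (htr : t ≠ r) (htb : t ≠ b) (ht : ∀ U ∈ P.parts, ∃ u ∈ U, c s(v, u) = t)
    {U : Finset V} (hU : U ∈ P.parts) {z : V} (hz : z ∈ U) (hzt : c s(v, z) ≠ t) :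
    IsTwoColorCut c t (c s(v, z)) (insert v S) (S \ U) := by
  have hcolor (x) (hx : x ∈ U) (y) (hy : y ∈ S) (hyU : y ∉ U) : c s(x, y) = c s(v, z) := by
    obtain ⟨W, hW, hyW⟩ := P.exists_mem hy
    obtain ⟨w, hw, rfl⟩ := ht W hW
    exact hc.color_eq_of_mem_part hhom hU hW (by rintro rfl; exact hyU hyW) hx hz hyW hw htr htb
      hzt.symm
  refine ⟨?_, sdiff_subset.trans_ssubset (ssubset_insert hvS), fun y hy x hx hxX ↦ ?_⟩
  · obtain ⟨W, hW, hWU⟩ := exists_mem_ne hP U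
    obtain ⟨w, hw⟩ := P.nonempty_of_mem_parts hW
    exact ⟨w, mem_sdiff.2 ⟨P.le hW hw, disjoint_left.1 (P.disjoint hW hU hWU) hw⟩⟩
  · obtain ⟨hyS, hyU⟩ := mem_sdiff.1 hy
    rw [Sym2.eq_swap]
    rcases mem_insert.1 hx with rfl | hxS
    · obtain ⟨u, hu, hut⟩ := ht U hU
      have := hcolor u hu y hyS hyU
      rw [Sym2.eq_swap] at this
      grind [hc x y u]
    · exact .inr (hcolor x (by simpa [hxS] using hxX) y hyS hyU)

theorem IsGallai.exists_isTwoColorCut_insert [DecidableEq V] (hc : IsGallai c) (hvS : v ∉ S)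
    {P : Finpartition S} (hP : 2 ≤ #P.parts)
    (hhom : ∀ U ∈ P.parts, IsHomogeneous (colorGraph c r) (colorGraph c b) S U) :
    ∃ r b X, IsTwoColorCut c r b (insert v S) X := by
  by_cases hforeign : ∃ U ∈ P.parts, ∀ u ∈ U, c s(v, u) = r ∨ c s(v, u) = b
  · obtain ⟨U, hU, hvU⟩ := hforeign
    refine ⟨r, b, U, P.nonempty_of_mem_parts hU, (P.le hU).trans_ssubset (ssubset_insert hvS),
      fun x hx y hy hyU ↦ ?_⟩
    rcases mem_insert.1 hy with rfl | hy
    · rw [Sym2.eq_swap]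
      exact hvU x hx
    · exact (hhom U hU).color_eq_or hx hy hyU
  push Not at hforeign
  obtain ⟨t, htr, htb, ht⟩ := hc.exists_color_eq_of_forall_part hP hhom hforeign
  by_cases hconst : ∀ u ∈ S, c s(v, u) = t
  · obtain ⟨U, hU⟩ : P.parts.Nonempty := card_pos.1 (by lia)
    obtain ⟨u, hu⟩ := P.nonempty_of_mem_parts hU
    refine ⟨t, t, {v}, singleton_nonempty v, ?_, by simpa using fun u hu _ ↦ hconst u hu⟩
    exact (ssubset_iff_of_subset (by simp)).2
      ⟨u, mem_insert_of_mem (P.le hU hu), by simpa using ne_of_mem_of_not_mem (P.le hU hu) hvS⟩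
  push Not at hconst
  obtain ⟨z, hz, hzt⟩ := hconst
  obtain ⟨U, hU, hzU⟩ := P.exists_mem hz
  refine ⟨t, c s(v, z), S \ U,
    hc.isTwoColorCut_sdiff_part hvS hP hhom htr htb (fun W hW ↦ ?_) hU hzU hzt⟩
  obtain ⟨w, hw, hwr, hwb⟩ := hforeign W hW
  exact ⟨w, hw, ((ht w (P.le hW hw)).resolve_left hwr).resolve_left hwb⟩

theorem IsGallai.exists_isTwoColorCut (hc : IsGallai c) (hS : 2 ≤ #S) :
    ∃ r b X, IsTwoColorCut c r b S X := by
  classical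
  induction S using Finset.induction with
  | empty => simp at hS
  | insert v S hv ih =>
    by_cases hS2 : 2 ≤ #S
    · obtain ⟨r, b, X, hX⟩ := ih hS2
      obtain ⟨P, hP, hhom⟩ := hc.exists_finpartition hX
      exact hc.exists_isTwoColorCut_insert hv hP hhom
    · obtain ⟨x, rfl⟩ : ∃ x, S = {x} := by
        rw [← card_eq_one]
        grind [card_insert_of_notMem]
      refine ⟨c s(x, v), c s(x, v), {x}, singleton_nonempty x, ssubset_insert hv, ?_⟩
      grind

end GallaiPartition

section Join

variable {V C : Type*} {G : SimpleGraph V} {c : Sym2 V → C} {r b : C} {S X Y : Finset V}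

/-- `X` and `Y` are nonempty subsets of `S` completely joined in `G`. -/
structure IsJoin (G : SimpleGraph V) (S X Y : Finset V) : Prop where
  left_subset : X ⊆ S
  right_subset : Y ⊆ S
  left_nonempty : X.Nonempty
  right_nonempty : Y.Nonempty
  complete : G.IsCompleteBetween X Y

theorem IsJoin.symm (h : IsJoin G S X Y) : IsJoin G S Y X :=
  ⟨h.right_subset, h.left_subset, h.right_nonempty, h.left_nonempty, h.complete.symm⟩

theorem IsJoin.left_ssubset (h : IsJoin G S X Y) : X ⊂ S := by
  obtain ⟨y, hy⟩ := h.right_nonempty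
  exact (ssubset_iff_of_subset h.left_subset).2
    ⟨y, h.right_subset hy, fun hyX ↦ G.irrefl (h.complete hyX hy)⟩

theorem IsJoin.cliqueExtFreeOn_left (h : IsJoin G S X Y) (hS : CliqueExtFreeOn G S 4 2) :
    CliqueExtFreeOn G X 3 1 := by
  obtain ⟨y, hy⟩ := h.right_nonempty
  exact cliqueExtFreeOn_of_adj hS (h.right_subset hy) h.left_subset
    fun x hx ↦ (h.complete hx hy).symm

theorem IsJoin.cliqueFreeOn_two_left (h : IsJoin G S X Y) (hS : G.CliqueFreeOn S 3) :
    G.CliqueFreeOn X 2 := by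
  obtain ⟨y, hy⟩ := h.right_nonempty
  exact cliqueFreeOn_of_adj hS (h.right_subset hy) h.left_subset
    fun x hx ↦ (h.complete hx hy).symm

theorem IsJoin.cliqueFreeOn_three_left (h : IsJoin G S X Y) (hS : CliqueExtFreeOn G S 4 2)
    (hY : 1 < #Y) : G.CliqueFreeOn X 3 := by
  refine (cliqueFreeOn_or_of_isCompleteBetween (n := 3) (m := 1) hS (by lia) h.left_subset
    h.right_subset h.complete hY).resolve_right fun hY1 ↦ ?_
  obtain ⟨y, hy⟩ := h.right_nonempty
  exact hY1 (t := {y}) (by simpa using hy) (by simp)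

theorem IsJoin.cliqueFreeOn_two_or (h : IsJoin G S X Y) (hS : CliqueExtFreeOn G S 4 2) :
    G.CliqueFreeOn X 2 ∨ G.CliqueFreeOn Y 2 ∨ #X ≤ 2 ∧ #Y ≤ 2 := by
  have hX := cliqueFreeOn_or_of_isCompleteBetween (n := 2) (m := 2) hS le_rfl h.left_subset
    h.right_subset h.complete
  have hY := cliqueFreeOn_or_of_isCompleteBetween (n := 2) (m := 2) hS le_rfl h.right_subset
    h.left_subset h.complete.symm
  grind

theorem isJoin_sdiff [DecidableEq V] (hX : X.Nonempty) (hXS : X ⊂ S)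
    (h : ∀ v ∈ S, v ∉ X → ∀ x ∈ X, G.Adj x v) : IsJoin G S X (S \ X) where
  left_subset := hXS.1
  right_subset := sdiff_subset
  left_nonempty := hX
  right_nonempty := sdiff_nonempty.2 hXS.2
  complete x hx v hv := h v (mem_sdiff.1 hv).1 (mem_sdiff.1 hv).2 x hx

theorem isJoin_commonNbrs (hXS : X ⊆ S) (hX : X.Nonempty) (h : (commonNbrs G S X).Nonempty) :
    IsJoin G S X (commonNbrs G S X) :=
  ⟨hXS, commonNbrs_subset, hX, h, isCompleteBetween_commonNbrs⟩

/-- A Gallai partition of `S`: two distinct colours `r` and `b` suffice between the parts, the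
edges between two parts have the same colour, and every part meets edges of both colours. -/
structure IsGallaiPartition [DecidableEq V] (c : Sym2 V → C) (r b : C) (P : Finpartition S) :
    Prop where
  ne : r ≠ b
  homogeneous : ∀ U ∈ P.parts, IsHomogeneous (colorGraph c r) (colorGraph c b) S U
  nonempty_left : ∀ U ∈ P.parts, (commonNbrs (colorGraph c r) S U).Nonempty
  nonempty_right : ∀ U ∈ P.parts, (commonNbrs (colorGraph c b) S U).Nonempty

theorem IsGallaiPartition.symm [DecidableEq V] {P : Finpartition S}
    (h : IsGallaiPartition c r b P) : IsGallaiPartition c b r P :=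
  ⟨h.ne.symm, fun U hU ↦ (h.homogeneous U hU).symm, h.nonempty_right, h.nonempty_left⟩

theorem isJoin_left_of_isGallaiPartition [DecidableEq V] {P : Finpartition S}
    (h : IsGallaiPartition c r b P) (hX : X ∈ P.parts) :
    IsJoin (colorGraph c r) S X (commonNbrs (colorGraph c r) S X) :=
  isJoin_commonNbrs (P.le hX) (P.nonempty_of_mem_parts hX) (h.nonempty_left X hX)

theorem IsGallai.exists_isJoin_or_isGallaiPartition [DecidableEq V] (hc : IsGallai c)
    (hS : 2 ≤ #S) :
    (∃ i X Y, IsJoin (colorGraph c i) S X Y ∧ #S ≤ #X + #Y) ∨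
      ∃ (r b : C) (P : Finpartition S), IsGallaiPartition c r b P := by
  obtain ⟨r, b, X, hX⟩ := hc.exists_isTwoColorCut hS
  obtain ⟨P, hP, hhom⟩ := hc.exists_finpartition hX
  by_contra! ⟨hjoin, hpart⟩
  have hmixed (U) (hU : U ∈ P.parts) (i) :
      ¬ ∀ v ∈ S, v ∉ U → ∀ x ∈ U, (colorGraph c i).Adj x v := by
    intro hi
    obtain ⟨W, hW, hWU⟩ := exists_mem_ne hP U
    obtain ⟨w, hw⟩ := P.nonempty_of_mem_parts hW
    have hUS : U ⊂ S := (ssubset_iff_of_subset (P.le hU)).2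
      ⟨w, P.le hW hw, disjoint_left.1 (P.disjoint hW hU hWU) hw⟩
    have := hjoin i U (S \ U) (isJoin_sdiff (P.nonempty_of_mem_parts hU) hUS hi)
    have := card_sdiff_add_card_eq_card hUS.1
    lia
  refine hpart r b P ⟨?_, hhom, fun U hU ↦ ?_, fun U hU ↦ ?_⟩
  · rintro rfl
    obtain ⟨U, hU⟩ : P.parts.Nonempty := card_pos.1 (by lia)
    exact hmixed U hU r fun v hv hvU ↦ or_self_iff.1 (hhom U hU v hv hvU)
  · by_contra! hempty
    exact hmixed U hU b fun v hv hvU ↦ (hhom U hU v hv hvU).resolve_left fun h ↦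
      notMem_empty v (hempty ▸ mem_commonNbrs.2 ⟨hv, h⟩)
  · by_contra! hempty
    exact hmixed U hU r fun v hv hvU ↦ (hhom U hU v hv hvU).resolve_right fun h ↦
      notMem_empty v (hempty ▸ mem_commonNbrs.2 ⟨hv, h⟩)

end Join

section MaxOrder

/-- The largest order of a Gallai colouring with `k` colours and no monochromatic `H₂`. -/
def h2FreeOrder : ℕ → ℕ
  | 0 => 1
  | 1 => 4
  | k + 2 => 17 * h2FreeOrder k

/-- The largest order of a Gallai colouring with `k` colours and no monochromatic triangle. -/
def triangleFreeOrder : ℕ → ℕ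
  | 0 => 1
  | 1 => 2
  | k + 2 => 5 * triangleFreeOrder k

/-- The bound on the order of a Gallai colouring in which `p` colours avoid `H₂` and `q` further
colours avoid triangles. -/
def maxOrder (p q : ℕ) : ℕ :=
  h2FreeOrder p * triangleFreeOrder q

variable {p q : ℕ}

theorem h2FreeOrder_two_mul (m : ℕ) : h2FreeOrder (2 * m) = 17 ^ m := by
  induction m with
  | zero => rfl
  | succ m ih => rw [Nat.mul_succ, h2FreeOrder, ih, pow_succ']

theorem h2FreeOrder_two_mul_add_one (m : ℕ) : h2FreeOrder (2 * m + 1) = 4 * 17 ^ m := by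
  induction m with
  | zero => rfl
  | succ m ih => rw [Nat.mul_succ, add_right_comm, h2FreeOrder, ih, pow_succ', mul_left_comm]

theorem h2FreeOrder_succ_bounds (p : ℕ) :
    4 * h2FreeOrder p ≤ h2FreeOrder (p + 1) ∧ 4 * h2FreeOrder (p + 1) ≤ 17 * h2FreeOrder p := by
  induction p with
  | zero => decide
  | succ p ih => simp only [h2FreeOrder]; lia

theorem triangleFreeOrder_succ_bounds (q : ℕ) :
    2 * triangleFreeOrder q ≤ triangleFreeOrder (q + 1) ∧
      2 * triangleFreeOrder (q + 1) ≤ 5 * triangleFreeOrder q := by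
  induction q with
  | zero => decide
  | succ q ih => simp only [triangleFreeOrder]; lia

theorem maxOrder_pos : 0 < maxOrder p q := by
  have hp : 0 < h2FreeOrder p := by
    induction p using h2FreeOrder.induct <;> simp_all [h2FreeOrder]
  have hq : 0 < triangleFreeOrder q := by
    induction q using triangleFreeOrder.induct <;> simp_all [triangleFreeOrder]
  exact Nat.mul_pos hp hq

theorem maxOrder_add_two_left : maxOrder (p + 2) q = 17 * maxOrder p q := by
  simp [maxOrder, h2FreeOrder, mul_assoc]

theorem maxOrder_add_two_right : maxOrder p (q + 2) = 5 * maxOrder p q := by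
  simp [maxOrder, triangleFreeOrder, mul_left_comm]

theorem maxOrder_succ_left_bounds :
    4 * maxOrder p q ≤ maxOrder (p + 1) q ∧ 4 * maxOrder (p + 1) q ≤ 17 * maxOrder p q := by
  simp only [maxOrder, ← mul_assoc]
  exact (h2FreeOrder_succ_bounds p).imp (Nat.mul_le_mul_right _) (Nat.mul_le_mul_right _)

theorem maxOrder_succ_right_bounds :
    2 * maxOrder p q ≤ maxOrder p (q + 1) ∧ 2 * maxOrder p (q + 1) ≤ 5 * maxOrder p q := by
  simp only [maxOrder, mul_left_comm _ (h2FreeOrder p)]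
  exact (triangleFreeOrder_succ_bounds q).imp (Nat.mul_le_mul_left _) (Nat.mul_le_mul_left _)

theorem maxOrder_mono_right (p : ℕ) : Monotone (maxOrder p) :=
  monotone_nat_of_le_succ fun _ ↦ le_trans (by lia) maxOrder_succ_right_bounds.1

end MaxOrder

section Avoids

variable {V C : Type*} [DecidableEq C] {c : Sym2 V → C} {S T X Y : Finset V} {A B : Finset C}
  {i : C}

/-- On `S` only colours from `A ∪ B` occur; those in `A` avoid `H₂`, those in `B` triangles. -/
structure Avoids (c : Sym2 V → C) (S : Finset V) (A B : Finset C) : Prop where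
  mem_or_mem : ∀ x ∈ S, ∀ y ∈ S, x ≠ y → c s(x, y) ∈ A ∨ c s(x, y) ∈ B
  cliqueExtFreeOn : ∀ i ∈ A, CliqueExtFreeOn (colorGraph c i) S 4 2
  cliqueFreeOn : ∀ i ∈ B, (colorGraph c i).CliqueFreeOn S 3

omit [DecidableEq C] in
theorem Avoids.subset (h : Avoids c S A B) (hTS : T ⊆ S) : Avoids c T A B where
  mem_or_mem x hx y hy := h.mem_or_mem x (hTS hx) y (hTS hy)
  cliqueExtFreeOn i hi := (h.cliqueExtFreeOn i hi).subset hTS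
  cliqueFreeOn i hi := cliqueFreeOn_subset (h.cliqueFreeOn i hi) hTS

theorem Avoids.of_insert_left (h : Avoids c S (insert i A) B)
    (hi : (colorGraph c i).CliqueFreeOn S 2) : Avoids c S A B where
  mem_or_mem x hx y hy hxy := by
    have hne : c s(x, y) ≠ i := fun hci ↦
      cliqueFreeOn_two_iff.1 hi x hx y hy (colorGraph_adj.2 ⟨hci, hxy⟩)
    simpa [hne] using h.mem_or_mem x hx y hy hxy
  cliqueExtFreeOn j hj := h.cliqueExtFreeOn j (mem_insert_of_mem hj)
  cliqueFreeOn := h.cliqueFreeOn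

theorem Avoids.of_insert_right (h : Avoids c S A (insert i B))
    (hi : (colorGraph c i).CliqueFreeOn S 2) : Avoids c S A B where
  mem_or_mem x hx y hy hxy := by
    have hne : c s(x, y) ≠ i := fun hci ↦
      cliqueFreeOn_two_iff.1 hi x hx y hy (colorGraph_adj.2 ⟨hci, hxy⟩)
    simpa [hne] using h.mem_or_mem x hx y hy hxy
  cliqueExtFreeOn := h.cliqueExtFreeOn
  cliqueFreeOn j hj := h.cliqueFreeOn j (mem_insert_of_mem hj)

theorem Avoids.insert_right (h : Avoids c S (insert i A) B)
    (hi : (colorGraph c i).CliqueFreeOn S 3) : Avoids c S A (insert i B) where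
  mem_or_mem x hx y hy hxy := by
    have := h.mem_or_mem x hx y hy hxy
    simp only [mem_insert] at this ⊢
    tauto
  cliqueExtFreeOn j hj := h.cliqueExtFreeOn j (mem_insert_of_mem hj)
  cliqueFreeOn j hj := by
    obtain rfl | hj := mem_insert.1 hj
    exacts [hi, h.cliqueFreeOn j hj]

end Avoids

section Induction

variable {V C : Type*} [DecidableEq C] {c : Sym2 V → C} {S T X Y : Finset V} {A B : Finset C}
  {i : C}

/-- The induction hypothesis of the main bound: it holds for all proper subsets of `S`. -/
def BoundedBelow (c : Sym2 V → C) (S : Finset V) : Prop :=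
  ∀ ⦃T⦄, T ⊂ S → ∀ ⦃A B⦄, Avoids c T A B → #T ≤ maxOrder #A #B

omit [DecidableEq C] in
theorem BoundedBelow.subset (h : BoundedBelow c S) (hTS : T ⊆ S) : BoundedBelow c T :=
  fun _ hR ↦ h (hR.trans_subset hTS)

theorem BoundedBelow.card_le_of_cliqueFreeOn_two (hS : BoundedBelow c S) (hT : T ⊂ S)
    (hA : Avoids c T (insert i A) B) (hi : (colorGraph c i).CliqueFreeOn T 2) :
    #T ≤ maxOrder #A #B :=
  hS hT (hA.of_insert_left hi)

theorem BoundedBelow.card_le_of_cliqueFreeOn_three (hS : BoundedBelow c S) (hT : T ⊂ S)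
    (hA : Avoids c T (insert i A) B) (hi : (colorGraph c i).CliqueFreeOn T 3) :
    #T ≤ maxOrder #A (#B + 1) :=
  (hS hT (hA.insert_right hi)).trans (maxOrder_mono_right _ (card_insert_le i B))

theorem BoundedBelow.card_le_of_cliqueExtFreeOn (hS : BoundedBelow c S) (hT : T ⊂ S)
    (hA : Avoids c T (insert i A) B) (hi : CliqueExtFreeOn (colorGraph c i) T 3 1) :
    #T ≤ maxOrder #A #B + maxOrder #A (#B + 1) := by
  classical
  obtain ⟨M, hMT, hM, hTM⟩ := exists_subset_cliqueFreeOn_two_sdiff hi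
  rw [← card_sdiff_add_card_eq_card hMT, add_comm]
  exact add_le_add
    (hS.card_le_of_cliqueFreeOn_two (hMT.trans_ssubset hT) (hA.subset hMT) hM)
    (hS.card_le_of_cliqueFreeOn_three (sdiff_subset.trans_ssubset hT) (hA.subset sdiff_subset) hTM)

theorem BoundedBelow.card_le_of_isJoin_of_card_le_one (hS : BoundedBelow c S)
    (hA : Avoids c S (insert i A) B) (h : IsJoin (colorGraph c i) S X Y) (hY : #Y ≤ 1) :
    #X + #Y ≤ maxOrder #A #B + maxOrder #A (#B + 1) + 1 :=
  add_le_add (hS.card_le_of_cliqueExtFreeOn h.left_ssubset (hA.subset h.left_subset)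
    (h.cliqueExtFreeOn_left (hA.cliqueExtFreeOn i (mem_insert_self i A)))) hY

theorem BoundedBelow.card_add_card_le_of_isJoin (hS : BoundedBelow c S)
    (hA : Avoids c S (insert i A) B) (h : IsJoin (colorGraph c i) S X Y) :
    #X + #Y ≤ maxOrder #A #B + maxOrder #A (#B + 1) + 1 := by
  by_cases hY : #Y ≤ 1
  · exact hS.card_le_of_isJoin_of_card_le_one hA h hY
  by_cases hX : #X ≤ 1
  · rw [add_comm #X]
    exact hS.card_le_of_isJoin_of_card_le_one hA h.symm hX
  have hi := hA.cliqueExtFreeOn i (mem_insert_self i A)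
  have hAX := hA.subset h.left_subset
  have hAY := hA.subset h.right_subset
  have hX3 := hS.card_le_of_cliqueFreeOn_three h.left_ssubset hAX
    (h.cliqueFreeOn_three_left hi (by lia))
  have hY3 := hS.card_le_of_cliqueFreeOn_three h.symm.left_ssubset hAY
    (h.symm.cliqueFreeOn_three_left hi (by lia))
  rcases h.cliqueFreeOn_two_or hi with hX2 | hY2 | hsmall
  · have := hS.card_le_of_cliqueFreeOn_two h.left_ssubset hAX hX2
    lia
  · have := hS.card_le_of_cliqueFreeOn_two h.symm.left_ssubset hAY hY2
    lia
  · have := maxOrder_pos (p := #A) (q := #B)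
    have := maxOrder_succ_right_bounds (p := #A) (q := #B)
    lia

theorem BoundedBelow.card_right_le_of_isJoin (hS : BoundedBelow c S)
    (hA : Avoids c S (insert i A) B) (h : IsJoin (colorGraph c i) S X Y)
    (hX : ¬ (colorGraph c i).CliqueFreeOn X 2) : #Y ≤ max 2 (maxOrder #A #B) := by
  rcases h.cliqueFreeOn_two_or (hA.cliqueExtFreeOn i (mem_insert_self i A)) with hX2 | hY2 | hsmall
  · exact absurd hX2 hX
  · exact le_max_of_le_right
      (hS.card_le_of_cliqueFreeOn_two h.symm.left_ssubset (hA.subset h.right_subset) hY2)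
  · exact le_max_of_le_left hsmall.2

omit [DecidableEq C] in
theorem BoundedBelow.card_le_of_isJoin (hS : BoundedBelow c S) (hA : Avoids c S A B)
    (hi : i ∈ A ∨ i ∈ B) (h : IsJoin (colorGraph c i) S X Y) : #X + #Y ≤ maxOrder #A #B := by
  classical
  rcases hi with hi | hi
  · rw [← insert_erase hi] at hA
    have := hS.card_add_card_le_of_isJoin hA h
    have := maxOrder_succ_right_bounds (p := #(A.erase i)) (q := #B)
    have := maxOrder_succ_left_bounds (p := #(A.erase i)) (q := #B)
    have := maxOrder_pos (p := #(A.erase i)) (q := #B)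
    rw [← card_erase_add_one hi]
    lia
  · rw [← insert_erase hi] at hA
    have hi' := hA.cliqueFreeOn i (mem_insert_self i _)
    have := hS h.left_ssubset
      ((hA.subset h.left_subset).of_insert_right (h.cliqueFreeOn_two_left hi'))
    have := hS h.symm.left_ssubset
      ((hA.subset h.right_subset).of_insert_right (h.symm.cliqueFreeOn_two_left hi'))
    have := maxOrder_succ_right_bounds (p := #A) (q := #(B.erase i))
    rw [← card_erase_add_one hi]
    lia

end Induction

section GallaiPartitionBound

variable {V C : Type*} [DecidableEq C] {c : Sym2 V → C} {S X R D : Finset V} {A B : Finset C}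
  {r b : C}

theorem Avoids.swap (hA : Avoids c S (insert r (insert b A)) B) :
    Avoids c S (insert b (insert r A)) B :=
  insert_comm r b A ▸ hA

theorem BoundedBelow.card_add_le_of_triangleFree (hS : BoundedBelow c S)
    (hA : Avoids c S (insert r (insert b A)) B) (hrA : r ∉ A) (hbA : b ∉ A)
    (hR : IsJoin (colorGraph c r) S X R) (hD : IsJoin (colorGraph c b) S X D)
    (hXr : ¬ (colorGraph c r).CliqueFreeOn X 2) (hXb : ¬ (colorGraph c b).CliqueFreeOn X 2)
    (hXb3 : (colorGraph c b).CliqueFreeOn X 3) :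
    #X + #R + #D ≤ 17 * maxOrder #A #B := by
  have hRcard := hS.card_right_le_of_isJoin hA hR hXr
  have hDcard := hS.card_right_le_of_isJoin hA.swap hD hXb
  have hXA : Avoids c X (insert r A) (insert b B) :=
    (hA.subset hR.left_subset).swap.insert_right hXb3
  have hXcard := hS.card_le_of_cliqueExtFreeOn hR.left_ssubset hXA
    (hR.cliqueExtFreeOn_left (hA.cliqueExtFreeOn r (mem_insert_self _ _)))
  rw [card_insert_of_notMem hbA] at hRcard
  rw [card_insert_of_notMem hrA] at hDcard
  have := maxOrder_mono_right #A (card_insert_le b B)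
  have := maxOrder_mono_right #A (Nat.succ_le_succ (card_insert_le b B))
  have := maxOrder_add_two_right (p := #A) (q := #B)
  have := maxOrder_succ_right_bounds (p := #A) (q := #B)
  have := maxOrder_succ_left_bounds (p := #A) (q := #B)
  have := maxOrder_pos (p := #A) (q := #B)
  simp only [Nat.succ_eq_add_one, add_assoc, Nat.reduceAdd] at *
  lia

theorem BoundedBelow.card_add_le_of_edges (hS : BoundedBelow c S)
    (hA : Avoids c S (insert r (insert b A)) B) (hrA : r ∉ A) (hbA : b ∉ A)
    (hR : IsJoin (colorGraph c r) S X R) (hD : IsJoin (colorGraph c b) S X D)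
    (hXr : ¬ (colorGraph c r).CliqueFreeOn X 2) (hXb : ¬ (colorGraph c b).CliqueFreeOn X 2) :
    #X + #R + #D ≤ 17 * maxOrder #A #B := by
  by_cases hXb3 : (colorGraph c b).CliqueFreeOn X 3
  · exact hS.card_add_le_of_triangleFree hA hrA hbA hR hD hXr hXb hXb3
  by_cases hXr3 : (colorGraph c r).CliqueFreeOn X 3
  · rw [add_right_comm]
    exact hS.card_add_le_of_triangleFree hA.swap hbA hrA hD hR hXb hXr hXr3
  have hr := hA.cliqueExtFreeOn r (mem_insert_self _ _)
  have hb := hA.cliqueExtFreeOn b (mem_insert_of_mem (mem_insert_self _ _))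
  have hRcard : #R ≤ 1 := not_lt.1 (mt (hR.cliqueFreeOn_three_left hr) hXr3)
  have hDcard : #D ≤ 1 := not_lt.1 (mt (hD.cliqueFreeOn_three_left hb) hXb3)
  have hXcard := hS.card_le_of_cliqueExtFreeOn hR.left_ssubset (hA.subset hR.left_subset)
    (hR.cliqueExtFreeOn_left hr)
  rw [card_insert_of_notMem hbA] at hXcard
  have := maxOrder_succ_right_bounds (p := #A + 1) (q := #B)
  have := maxOrder_succ_left_bounds (p := #A) (q := #B)
  have := maxOrder_pos (p := #A) (q := #B)
  lia

theorem BoundedBelow.card_add_le_of_edge (hS : BoundedBelow c S)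
    (hA : Avoids c S (insert r (insert b A)) B) (hrA : r ∉ A)
    (hR : IsJoin (colorGraph c r) S X R) (hD : IsJoin (colorGraph c b) S X D)
    (hXr : ¬ (colorGraph c r).CliqueFreeOn X 2) (hXb : (colorGraph c b).CliqueFreeOn X 2)
    (hRcard : (colorGraph c r).CliqueFreeOn R 2 →
      #R ≤ maxOrder #A #B + maxOrder #A (#B + 1) + 1) :
    #X + #R + #D ≤ 17 * maxOrder #A #B := by
  have hr := hA.cliqueExtFreeOn r (mem_insert_self _ _)
  have hb := hA.cliqueExtFreeOn b (mem_insert_of_mem (mem_insert_self _ _))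
  have hXA : Avoids c X (insert r A) B := (hA.subset hR.left_subset).swap.of_insert_left hXb
  have hX2 : 1 < #X := by
    by_contra! hX1
    exact hXr (cliqueFreeOn_of_card_lt _ (by lia))
  have hDcard := hS.card_le_of_cliqueFreeOn_three hD.symm.left_ssubset
    (hA.subset hD.right_subset).swap (hD.symm.cliqueFreeOn_three_left hb hX2)
  rw [card_insert_of_notMem hrA] at hDcard
  have := maxOrder_succ_right_bounds (p := #A) (q := #B)
  have := maxOrder_succ_right_bounds (p := #A + 1) (q := #B)
  have := maxOrder_succ_left_bounds (p := #A) (q := #B)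
  have := maxOrder_succ_left_bounds (p := #A) (q := #B + 1)
  have := maxOrder_pos (p := #A) (q := #B)
  by_cases hXr3 : (colorGraph c r).CliqueFreeOn X 3
  · have hXcard := hS.card_le_of_cliqueFreeOn_three hR.left_ssubset hXA hXr3
    rcases (hR.cliqueFreeOn_two_or hr).resolve_left hXr with hR2 | hsmall
    · have := hRcard hR2
      lia
    · lia
  · have hR1 : #R ≤ 1 := not_lt.1 (mt (hR.cliqueFreeOn_three_left hr) hXr3)
    have hXcard := hS.card_le_of_cliqueExtFreeOn hR.left_ssubset hXA (hR.cliqueExtFreeOn_left hr)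
    lia

theorem BoundedBelow.card_add_le_of_edge_of_cliqueFreeOn_three (hS : BoundedBelow c S)
    (hA : Avoids c S (insert r A) (insert b B)) (hrA : r ∉ A) (hbB : b ∉ B)
    (hR : IsJoin (colorGraph c r) S X R) (hD : IsJoin (colorGraph c b) S X D)
    (hXr : ¬ (colorGraph c r).CliqueFreeOn X 2) :
    #X + #R + #D ≤ maxOrder (#A + 1) (#B + 1) := by
  have hr := hA.cliqueExtFreeOn r (mem_insert_self _ _)
  have hb := hA.cliqueFreeOn b (mem_insert_self _ _)
  have hXA : Avoids c X (insert r A) B :=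
    (hA.subset hR.left_subset).of_insert_right (hD.cliqueFreeOn_two_left hb)
  have hDcard := hS hD.symm.left_ssubset
    ((hA.subset hD.right_subset).of_insert_right (hD.symm.cliqueFreeOn_two_left hb))
  have hRcard := hS.card_right_le_of_isJoin hA hR hXr
  rw [card_insert_of_notMem hrA] at hDcard
  rw [card_insert_of_notMem hbB] at hRcard
  have := maxOrder_succ_right_bounds (p := #A) (q := #B)
  have := maxOrder_succ_right_bounds (p := #A + 1) (q := #B)
  have := maxOrder_succ_left_bounds (p := #A) (q := #B)
  have := maxOrder_succ_left_bounds (p := #A) (q := #B + 1)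
  have := maxOrder_pos (p := #A) (q := #B)
  by_cases hXr3 : (colorGraph c r).CliqueFreeOn X 3
  · have hXcard := hS.card_le_of_cliqueFreeOn_three hR.left_ssubset hXA hXr3
    lia
  · have hR1 : #R ≤ 1 := not_lt.1 (mt (hR.cliqueFreeOn_three_left hr) hXr3)
    have hXcard := hS.card_le_of_cliqueExtFreeOn hR.left_ssubset hXA (hR.cliqueExtFreeOn_left hr)
    lia

end GallaiPartitionBound

section GallaiPartitionOrder

variable {V C : Type*} [DecidableEq V] [DecidableEq C] {c : Sym2 V → C} {S X : Finset V}
  {A B : Finset C} {r b : C} {P : Finpartition S}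

omit [DecidableEq C] in
theorem IsGallaiPartition.part_subset_commonNbrs (h : IsGallaiPartition c r b P) {w : V}
    (hw : w ∈ commonNbrs (colorGraph c r) S X) (hX : X ∈ P.parts) :
    P.part w ⊆ commonNbrs (colorGraph c r) S X := by
  obtain ⟨hwS, hwX⟩ := mem_commonNbrs.1 hw
  have hW := P.part_mem.2 hwS
  have hWX : P.part w ≠ X := fun heq ↦
    (colorGraph c r).irrefl (hwX w (heq ▸ P.mem_part_self.2 hwS))
  intro u hu
  refine mem_commonNbrs.2 ⟨P.le hW hu, fun x hx ↦ ?_⟩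
  have hxW : x ∉ P.part w := disjoint_right.1 (P.disjoint hW hX hWX) hx
  have hcolor := (h.homogeneous _ hW).color_eq hu (P.mem_part_self.2 hwS) (P.le hX hx) hxW
  have hwx := colorGraph_adj.1 (hwX x hx).symm
  exact (colorGraph_adj.2 ⟨hcolor.trans hwx.1, fun hux ↦ hxW (hux ▸ hu)⟩).symm

theorem IsGallaiPartition.card_commonNbrs_le (h : IsGallaiPartition c r b P)
    (hS : BoundedBelow c S) (hA : Avoids c S (insert r (insert b A)) B) (hX : X ∈ P.parts)
    (hR : (colorGraph c r).CliqueFreeOn (commonNbrs (colorGraph c r) S X) 2) :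
    #(commonNbrs (colorGraph c r) S X) ≤ maxOrder #A #B + maxOrder #A (#B + 1) + 1 := by
  set R := commonNbrs (colorGraph c r) S X
  obtain ⟨w, hw⟩ := h.nonempty_left X hX
  have hRS : R ⊆ S := commonNbrs_subset
  have hW := P.part_mem.2 (hRS hw)
  have hwW := P.mem_part_self.2 (hRS hw)
  have hRA : Avoids c R (insert b A) B := (hA.subset hRS).of_insert_left hR
  have hWR : P.part w ⊆ R := h.part_subset_commonNbrs hw hX
  rcases hWR.eq_or_ssubset with hWR | hWR
  · have hjoin := isJoin_left_of_isGallaiPartition h.symm hW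
    have hpaw := hjoin.cliqueExtFreeOn_left (hA.cliqueExtFreeOn b (by simp))
    have hsub := hjoin.left_ssubset
    rw [hWR] at hpaw hsub
    exact (hS.card_le_of_cliqueExtFreeOn hsub hRA hpaw).trans (Nat.le_succ _)
  · have hblue (v) (hv : v ∈ R) (hvW : v ∉ P.part w) :
        ∀ x ∈ P.part w, (colorGraph c b).Adj x v :=
      (h.homogeneous _ hW v (hRS hv) hvW).resolve_left fun hr ↦
        cliqueFreeOn_two_iff.1 hR w hw v hv (hr w hwW)
    rw [← card_sdiff_add_card_eq_card hWR.1, add_comm]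
    exact (hS.subset hRS).card_add_card_le_of_isJoin hRA (isJoin_sdiff ⟨w, hwW⟩ hWR hblue)

omit [DecidableEq C] in
theorem IsGallaiPartition.card_le_mul (h : IsGallaiPartition c r b P) {m n : ℕ}
    (hm : ∀ T ⊆ S, (colorGraph c r ⊔ colorGraph c b).IsClique T → #T ≤ m)
    (hn : ∀ U ∈ P.parts, #U ≤ n) : #S ≤ m * n := by
  obtain ⟨T, hTS, hT⟩ := P.exists_subset_part_bijOn
  have hclique : (colorGraph c r ⊔ colorGraph c b).IsClique T := by
    intro u hu v hv huv
    have hvu : v ∉ P.part u := fun hvu ↦ huv <| hT.injOn hu hv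
      (P.part_eq_of_mem (P.part_mem.2 (hTS hu)) hvu).symm
    exact (h.homogeneous _ (P.part_mem.2 (hTS hu)) v (hTS hv) hvu).imp
      (· u (P.mem_part_self.2 (hTS hu))) (· u (P.mem_part_self.2 (hTS hu)))
  calc #S = ∑ U ∈ P.parts, #U := P.sum_card_parts.symm
    _ ≤ #P.parts * n := by simpa using sum_le_card_nsmul _ _ _ hn
    _ = #T * n := by rw [hT.finsetCard_eq]
    _ ≤ m * n := Nat.mul_le_mul_right _ (hm T hTS hclique)

omit [DecidableEq C] in
theorem IsGallaiPartition.part_ssubset (h : IsGallaiPartition c r b P) (hX : X ∈ P.parts) :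
    X ⊂ S :=
  (isJoin_left_of_isGallaiPartition h hX).left_ssubset

theorem IsGallaiPartition.card_le_of_mem_of_mem (h : IsGallaiPartition c r b P)
    (hS : BoundedBelow c S) (hA : Avoids c S (insert r (insert b A)) B) (hrA : r ∉ A)
    (hbA : b ∉ A) : #S ≤ 17 * maxOrder #A #B := by
  by_cases hedge : ∀ X ∈ P.parts, (colorGraph c r).CliqueFreeOn X 2 ∧
      (colorGraph c b).CliqueFreeOn X 2
  · refine h.card_le_mul (fun T hTS hT ↦ ?_) fun X hX ↦ ?_
    · have hAT := hA.subset hTS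
      exact card_le_seventeen_of_cliqueExtFreeOn hT (hAT.cliqueExtFreeOn r (by simp))
        (hAT.cliqueExtFreeOn b (by simp))
    · exact hS (h.part_ssubset hX) <|
        ((hA.subset (P.le hX)).of_insert_left (hedge X hX).1).of_insert_left (hedge X hX).2
  push Not at hedge
  obtain ⟨X, hX, hrb⟩ := hedge
  have hR := isJoin_left_of_isGallaiPartition h hX
  have hD := isJoin_left_of_isGallaiPartition h.symm hX
  refine (h.homogeneous X hX).card_le.trans ?_
  by_cases hXr : (colorGraph c r).CliqueFreeOn X 2
  · rw [add_right_comm]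
    exact hS.card_add_le_of_edge hA.swap hbA hD hR (hrb hXr) hXr
      (h.symm.card_commonNbrs_le hS hA.swap hX)
  by_cases hXb : (colorGraph c b).CliqueFreeOn X 2
  · exact hS.card_add_le_of_edge hA hrA hR hD hXr hXb (h.card_commonNbrs_le hS hA hX)
  · exact hS.card_add_le_of_edges hA hrA hbA hR hD hXr hXb

theorem IsGallaiPartition.card_le_of_mem_left_of_mem_right (h : IsGallaiPartition c r b P)
    (hS : BoundedBelow c S) (hA : Avoids c S (insert r A) (insert b B)) (hrA : r ∉ A)
    (hbB : b ∉ B) : #S ≤ maxOrder (#A + 1) (#B + 1) := by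
  have hb := hA.cliqueFreeOn b (by simp)
  by_cases hedge : ∀ X ∈ P.parts, (colorGraph c r).CliqueFreeOn X 2
  · have hcard : #S ≤ 8 * maxOrder #A #B := by
      refine h.card_le_mul (fun T hTS hT ↦ ?_) fun X hX ↦ ?_
      · exact card_le_eight_of_cliqueExtFreeOn hT
          ((hA.cliqueExtFreeOn r (by simp)).subset hTS) (cliqueFreeOn_subset hb hTS)
      · exact hS (h.part_ssubset hX) <|
          ((hA.subset (P.le hX)).of_insert_left (hedge X hX)).of_insert_right
            ((isJoin_left_of_isGallaiPartition h.symm hX).cliqueFreeOn_two_left hb)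
    have := maxOrder_succ_left_bounds (p := #A) (q := #B)
    have := maxOrder_succ_right_bounds (p := #A + 1) (q := #B)
    lia
  push Not at hedge
  obtain ⟨X, hX, hXr⟩ := hedge
  exact (h.homogeneous X hX).card_le.trans <|
    hS.card_add_le_of_edge_of_cliqueFreeOn_three hA hrA hbB
      (isJoin_left_of_isGallaiPartition h hX) (isJoin_left_of_isGallaiPartition h.symm hX) hXr

theorem IsGallaiPartition.card_le_of_mem_right_of_mem_right (h : IsGallaiPartition c r b P)
    (hS : BoundedBelow c S) (hA : Avoids c S A (insert r (insert b B))) :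
    #S ≤ 5 * maxOrder #A #B := by
  have hr := hA.cliqueFreeOn r (by simp)
  have hb := hA.cliqueFreeOn b (by simp)
  refine h.card_le_mul (fun T hTS hT ↦ ?_) fun X hX ↦ ?_
  · exact card_le_five_of_cliqueFreeOn hT (cliqueFreeOn_subset hr hTS) (cliqueFreeOn_subset hb hTS)
  · have hXr := (isJoin_left_of_isGallaiPartition h hX).cliqueFreeOn_two_left hr
    have hXb := (isJoin_left_of_isGallaiPartition h.symm hX).cliqueFreeOn_two_left hb
    exact hS (h.part_ssubset hX) <|
      ((hA.subset (P.le hX)).of_insert_right hXr).of_insert_right hXb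

omit [DecidableEq V] [DecidableEq C] in
theorem Avoids.mem_or_mem_of_isJoin {i : C} {Y : Finset V} (hA : Avoids c S A B)
    (h : IsJoin (colorGraph c i) S X Y) : i ∈ A ∨ i ∈ B := by
  obtain ⟨x, hx⟩ := h.left_nonempty
  obtain ⟨y, hy⟩ := h.right_nonempty
  obtain ⟨rfl, hxy⟩ := colorGraph_adj.1 (h.complete hx hy)
  exact hA.mem_or_mem x (h.left_subset hx) y (h.right_subset hy) hxy

omit [DecidableEq C] in
theorem IsGallaiPartition.card_le_maxOrder_of_mem_left (h : IsGallaiPartition c r b P)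
    (hS : BoundedBelow c S) (hA : Avoids c S A B) (hr : r ∈ A) (hb : b ∈ A ∨ b ∈ B) :
    #S ≤ maxOrder #A #B := by
  classical
  rw [← insert_erase hr] at hA
  rw [← card_erase_add_one hr]
  rcases hb with hb | hb
  · have hb' : b ∈ A.erase r := mem_erase.2 ⟨h.ne.symm, hb⟩
    rw [← insert_erase hb'] at hA
    rw [← card_erase_add_one hb', add_assoc, maxOrder_add_two_left]
    exact h.card_le_of_mem_of_mem hS hA (by simp) (by simp)
  · rw [← insert_erase hb] at hA
    rw [← card_erase_add_one hb]
    exact h.card_le_of_mem_left_of_mem_right hS hA (by simp) (by simp)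

omit [DecidableEq C] in
theorem IsGallaiPartition.card_le_maxOrder (h : IsGallaiPartition c r b P)
    (hS : BoundedBelow c S) (hA : Avoids c S A B) (hne : S.Nonempty) :
    #S ≤ maxOrder #A #B := by
  classical
  obtain ⟨v, hv⟩ := hne
  have hv := P.part_mem.2 hv
  have hr := hA.mem_or_mem_of_isJoin (isJoin_left_of_isGallaiPartition h hv)
  have hb := hA.mem_or_mem_of_isJoin (isJoin_left_of_isGallaiPartition h.symm hv)
  by_cases hrA : r ∈ A
  · exact h.card_le_maxOrder_of_mem_left hS hA hrA hb
  by_cases hbA : b ∈ A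
  · exact h.symm.card_le_maxOrder_of_mem_left hS hA hbA hr
  have hr := hr.resolve_left hrA
  have hb' : b ∈ B.erase r := mem_erase.2 ⟨h.ne.symm, hb.resolve_left hbA⟩
  rw [← insert_erase hr, ← insert_erase hb'] at hA
  rw [← card_erase_add_one hr, ← card_erase_add_one hb', add_assoc, maxOrder_add_two_right]
  exact h.card_le_of_mem_right_of_mem_right hS hA

omit [DecidableEq V] [DecidableEq C] in
theorem IsGallai.card_le_maxOrder (hc : IsGallai c) (hA : Avoids c S A B) :
    #S ≤ maxOrder #A #B := by
  classical
  induction S using Finset.strongInduction generalizing A B with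
  | H S ih =>
    have hS : BoundedBelow c S := fun T hT A B hA ↦ ih T hT hA
    by_cases hcard : #S < 2
    · exact (Nat.le_of_lt_succ hcard).trans maxOrder_pos
    rcases hc.exists_isJoin_or_isGallaiPartition (not_lt.1 hcard) with
      ⟨i, X, Y, hXY, hSle⟩ | ⟨r, b, P, hP⟩
    · exact hSle.trans (hS.card_le_of_isJoin hA (hA.mem_or_mem_of_isJoin hXY) hXY)
    · exact hP.card_le_maxOrder hS hA (card_pos.1 (by lia))

end GallaiPartitionOrder

section FreeColoring

variable {U V W C D : Type*} {F : SimpleGraph U}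

/-- Some Gallai colouring of the complete graph on `V` with colours in `C` has no monochromatic
copy of `F`. -/
def HasFreeColoring (F : SimpleGraph U) (V C : Type*) : Prop :=
  ∃ c : Sym2 V → C, IsGallai c ∧ ∀ i, F.Free (colorGraph c i)

theorem HasFreeColoring.of_embedding (h : HasFreeColoring F V C) (f : W ↪ V) (e : C ≃ D) :
    HasFreeColoring F W D := by
  obtain ⟨c, hc, hF⟩ := h
  refine ⟨e ∘ c ∘ Sym2.map f, fun u v w ↦ by simpa using hc (f u) (f v) (f w), fun i hi ↦ ?_⟩
  refine hF (e.symm i) (hi.trans ⟨⟨⟨f, fun huv ↦ ?_⟩, f.injective⟩⟩)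
  simp only [colorGraph_adj, Function.comp_apply, Sym2.map_mk] at huv ⊢
  exact ⟨e.injective (by simp [huv.1]), f.injective.ne huv.2⟩

open Classical in
/-- The lexicographic product of two edge-colourings: each vertex of the outer colouring `c` is
replaced by a copy of the inner colouring `d`, on a separate set of colours. -/
noncomputable def lexColoring (c : Sym2 V → C) (d : Sym2 W → D) : Sym2 (V × W) → C ⊕ D :=
  Sym2.lift ⟨fun p q ↦ if p.1 = q.1 then .inr (d s(p.2, q.2)) else .inl (c s(p.1, q.1)),
    fun _ _ ↦ if_congr eq_comm (by rw [Sym2.eq_swap]) (by rw [Sym2.eq_swap])⟩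

theorem lexColoring_mk_of_eq {c : Sym2 V → C} {d : Sym2 W → D} {p q : V × W} (h : p.1 = q.1) :
    lexColoring c d s(p, q) = .inr (d s(p.2, q.2)) :=
  if_pos h

theorem lexColoring_mk_of_ne {c : Sym2 V → C} {d : Sym2 W → D} {p q : V × W} (h : p.1 ≠ q.1) :
    lexColoring c d s(p, q) = .inl (c s(p.1, q.1)) :=
  if_neg h

theorem IsGallai.lexColoring {c : Sym2 V → C} {d : Sym2 W → D} (hc : IsGallai c)
    (hd : IsGallai d) : IsGallai (lexColoring c d) := by
  intro p q r
  by_cases hpq : p.1 = q.1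
  · by_cases hpr : p.1 = r.1
    · rw [lexColoring_mk_of_eq hpq, lexColoring_mk_of_eq hpr,
        lexColoring_mk_of_eq (hpq.symm.trans hpr)]
      exact (hd p.2 q.2 r.2).imp (congrArg _) (Or.imp (congrArg _) (congrArg _))
    · right; right
      rw [lexColoring_mk_of_ne hpr, lexColoring_mk_of_ne (hpq ▸ hpr), hpq]
  by_cases hpr : p.1 = r.1
  · right; left
    rw [lexColoring_mk_of_ne hpq, lexColoring_mk_of_ne (Ne.symm (hpr ▸ hpq)), hpr, Sym2.eq_swap]
  by_cases hqr : q.1 = r.1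
  · left
    rw [lexColoring_mk_of_ne hpq, lexColoring_mk_of_ne hpr, hqr]
  rw [lexColoring_mk_of_ne hpq, lexColoring_mk_of_ne hpr, lexColoring_mk_of_ne hqr]
  exact (hc p.1 q.1 r.1).imp (congrArg _) (Or.imp (congrArg _) (congrArg _))

/-- The projection to the outer colouring, on an outer colour. -/
def lexColoringOuterHom (c : Sym2 V → C) (d : Sym2 W → D) (i : C) :
    colorGraph (lexColoring c d) (.inl i) →g colorGraph c i where
  toFun := Prod.fst
  map_rel' {p q} hpq := by
    by_cases h : p.1 = q.1
    · simp [lexColoring_mk_of_eq h] at hpq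
    · simpa [lexColoring_mk_of_ne h, h] using hpq.1

theorem fst_eq_of_adj_lexColoring {c : Sym2 V → C} {d : Sym2 W → D} {j : D} {p q : V × W}
    (h : (colorGraph (lexColoring c d) (.inr j)).Adj p q) : p.1 = q.1 := by
  by_contra hne
  simp [lexColoring_mk_of_ne hne] at h

theorem free_colorGraph_lexColoring_inr {c : Sym2 V → C} {d : Sym2 W → D} {j : D}
    (hF : F.Preconnected) (hd : F.Free (colorGraph d j)) :
    F.Free (colorGraph (lexColoring c d) (.inr j)) := by
  rintro ⟨f⟩
  have hfst (u v) : (f u).1 = (f v).1 := by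
    obtain ⟨p⟩ := hF u v
    induction p with
    | nil => rfl
    | cons huv _ ih => exact (fst_eq_of_adj_lexColoring (f.toHom.map_adj huv)).trans ih
  refine hd ⟨⟨⟨fun u ↦ (f u).2, fun {u v} huv ↦ ?_⟩, fun u v huv ↦ ?_⟩⟩
  · obtain ⟨hcolor, hne⟩ := colorGraph_adj.1 (f.toHom.map_adj huv)
    exact colorGraph_adj.2
      ⟨Sum.inr_injective ((lexColoring_mk_of_eq (hfst u v)).symm.trans hcolor),
        fun h ↦ hne (Prod.ext (hfst u v) h)⟩
  · exact f.injective (Prod.ext (hfst u v) huv)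

theorem HasFreeColoring.lex {c : Sym2 V → C} (hc : IsGallai c)
    (hcF : ∀ i, IsEmpty (F →g colorGraph c i)) (hF : F.Preconnected)
    (h : HasFreeColoring F W D) : HasFreeColoring F (V × W) (C ⊕ D) := by
  obtain ⟨d, hd, hdF⟩ := h
  refine ⟨lexColoring c d, hc.lexColoring hd, ?_⟩
  rintro (i | j)
  · exact fun ⟨f⟩ ↦ (hcF i).elim ((lexColoringOuterHom c d i).comp f.toHom)
  · exact free_colorGraph_lexColoring_inr hF (hdF j)

end FreeColoring

section Paley

/-- The colouring of the complete graph on `ℤ/17ℤ` by the quadratic character of differences. -/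
def paleyColoring : Sym2 (ZMod 17) → Bool :=
  Sym2.lift ⟨fun x y ↦ decide (IsSquare (x - y)), by decide⟩

theorem isGallai_of_bool {V : Type*} (c : Sym2 V → Bool) : IsGallai c := by
  intro u v w
  generalize c s(u, v) = x, c s(u, w) = y, c s(v, w) = z
  decide +revert

theorem cliqueFree_colorGraph_paleyColoring (i : Bool) :
    (colorGraph paleyColoring i).CliqueFree 4 := by
  have key : ∀ a ≠ 0, decide (IsSquare (a : ZMod 17)) = i → ∀ b ≠ 0, decide (IsSquare b) = i →
      b ≠ a → decide (IsSquare (b - a)) = i → ∀ d ≠ 0, decide (IsSquare d) = i → d ≠ a →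
      decide (IsSquare (d - a)) = i → d ≠ b → decide (IsSquare (d - b)) ≠ i := by
    revert i
    decide +kernel
  rw [cliqueFree_iff]
  refine ⟨fun f ↦ ?_⟩
  have hne (s t : Fin 4) (h : s ≠ t) : f s - f 0 ≠ f t - f 0 :=
    fun hst ↦ h (f.injective (sub_left_injective hst))
  have hcol (s t : Fin 4) (h : s ≠ t) : decide (IsSquare (f s - f 0 - (f t - f 0))) = i := by
    rw [sub_sub_sub_cancel_right]
    exact (colorGraph_adj.1 (f.toHom.map_adj ((top_adj s t).2 h))).1
  have hne0 (s : Fin 4) (h : s ≠ 0) : f s - f 0 ≠ 0 := by simpa using hne s 0 h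
  have hcol0 (s : Fin 4) (h : s ≠ 0) : decide (IsSquare (f s - f 0)) = i := by
    simpa using hcol s 0 h
  exact key _ (hne0 1 (by decide)) (hcol0 1 (by decide)) _ (hne0 2 (by decide))
    (hcol0 2 (by decide)) (hne 2 1 (by decide)) (hcol 2 1 (by decide)) _ (hne0 3 (by decide))
    (hcol0 3 (by decide)) (hne 3 1 (by decide)) (hcol 3 1 (by decide)) (hne 3 2 (by decide))
    (hcol 3 2 (by decide))

end Paley

section H2

variable {V : Type*} {G : SimpleGraph V}

theorem cliqueExtFreeOn_of_free (hG : GH2.Free G) (S : Finset V) :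
    CliqueExtFreeOn G S 4 2 := by
  classical
  intro K T _ hK hTK hT t _ htK hadj
  obtain ⟨x, y, hxy, rfl⟩ := card_eq_two.1 hT
  have hcard : #(K \ {x, y}) = 2 := by rw [card_sdiff_of_subset hTK, hK.card_eq, hT]
  obtain ⟨z, w, hzw, hKT⟩ := card_eq_two.1 hcard
  have hx : x ∈ K := hTK (by simp)
  have hy : y ∈ K := hTK (by simp)
  obtain ⟨hz, hzx, hzy⟩ : z ∈ K ∧ z ≠ x ∧ z ≠ y := by
    simpa using (hKT ▸ mem_insert_self z {w} : z ∈ K \ {x, y})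
  obtain ⟨hw, hwx, hwy⟩ : w ∈ K ∧ w ≠ x ∧ w ≠ y := by
    simpa using (hKT ▸ mem_insert_of_mem (mem_singleton_self w) : w ∈ K \ {x, y})
  have hadjK {u v} (hu : u ∈ K) (hv : v ∈ K) (huv : u ≠ v) : G.Adj u v := hK.isClique hu hv huv
  have htne {u} (hu : u ∈ K) : t ≠ u := fun h ↦ htK (h ▸ hu)
  have htx := hadj x (by simp)
  have hty := hadj y (by simp)
  have hhom : ∀ a b, a < b → GH2.Adj a b → G.Adj (![z, t, w, x, y] a) (![z, t, w, x, y] b) := by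
    simp [Fin.forall_fin_succ, GH2, htx, hty, hadjK, hx, hy, hz, hw, hxy, hzw, hzx, hzy, hwx, hwy]
  have hinj : ∀ a b, a < b → ![z, t, w, x, y] a ≠ ![z, t, w, x, y] b := by
    simp [Fin.forall_fin_succ, (htne hz).symm, htne, hx, hy, hw, hxy, hzw, hzx, hzy, hwx, hwy]
  refine hG ⟨⟨⟨![z, t, w, x, y], fun {a b} hab ↦ ?_⟩, fun a b hab ↦ ?_⟩⟩
  · exact (lt_or_gt_of_ne hab.ne).elim (hhom a b · hab) fun h ↦ (hhom b a h hab.symm).symm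
  · by_contra hne
    exact (lt_or_gt_of_ne hne).elim (hinj a b · hab) (hinj b a · hab.symm)

theorem isEmpty_hom_of_cliqueFree (hG : G.CliqueFree 4) : IsEmpty (GH2 →g G) := by
  refine ⟨fun f ↦ ?_⟩
  let e : (⊤ : SimpleGraph (Fin 4)) →g GH2 := ⟨![0, 2, 3, 4], by simp only [GH2]; decide⟩
  exact (cliqueFree_iff.1 hG).elim ⟨f.comp e, (f.comp e).injective_of_top_hom⟩

theorem preconnected_GH2 : GH2.Preconnected := by
  have hadj : ∀ v ≠ 3, GH2.Adj 3 v := by simp only [GH2]; decide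
  have h (v : Fin 5) : GH2.Reachable 3 v := by
    obtain rfl | hv := eq_or_ne v 3
    exacts [.refl _, (hadj v hv).reachable]
  exact fun u v ↦ (h u).symm.trans (h v)

end H2

section Main

theorem isGallaiColoring_iff {n k : ℕ} {c : Sym2 (Fin n) → Fin k} :
    IsGallaiColoring (fun u v ↦ c s(u, v)) ↔ IsGallai c := by
  refine ⟨fun h u v w ↦ ?_, fun h ↦ ⟨fun _ _ ↦ congrArg c Sym2.eq_swap, ?_⟩⟩
  · by_contra! hcol
    refine h.2 ⟨u, v, w, ?_, ?_, ?_, hcol⟩ <;> rintro rfl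
    · exact hcol.2.2 rfl
    · exact hcol.2.1 (congrArg c Sym2.eq_swap)
    · exact hcol.1 rfl
  · rintro ⟨u, v, w, -, -, -, huvw⟩
    have := h u v w
    tauto

theorem hasMonoCopy_iff_s1 {U : Type} {F : SimpleGraph U} {n k : ℕ} {c : Sym2 (Fin n) → Fin k}
    {i : Fin k} : HasMonoCopy F (fun u v ↦ c s(u, v)) i ↔ F ⊑ colorGraph c i := by
  constructor
  · rintro ⟨f, hf, hF⟩
    exact ⟨⟨f, fun {a b} hab ↦ colorGraph_adj.2 ⟨hF a b hab, hf.ne hab.ne⟩⟩, hf⟩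
  · rintro ⟨f⟩
    exact ⟨f, f.injective, fun a b hab ↦ (colorGraph_adj.1 (f.toHom.map_adj hab)).1⟩

theorem not_hasFreeColoring_iff {U : Type} {F : SimpleGraph U} {n k : ℕ} :
    ¬ HasFreeColoring F (Fin n) (Fin k) ↔
      ∀ c : Fin n → Fin n → Fin k, IsGallaiColoring c → ∃ i, HasMonoCopy F c i := by
  constructor
  · intro h c hc
    obtain ⟨c, rfl⟩ : ∃ d : Sym2 (Fin n) → Fin k, (fun u v ↦ d s(u, v)) = c :=
      ⟨Sym2.lift ⟨c, hc.1⟩, rfl⟩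
    by_contra! hmono
    exact h ⟨c, isGallaiColoring_iff.1 hc, fun i hi ↦ hmono i (hasMonoCopy_iff_s1.2 hi)⟩
  · rintro h ⟨c, hc, hF⟩
    obtain ⟨i, hi⟩ := h _ (isGallaiColoring_iff.2 hc)
    exact hF i (hasMonoCopy_iff_s1.1 hi)

theorem GR_eq_add_one {U : Type} {F : SimpleGraph U} {N k : ℕ}
    (hN : HasFreeColoring F (Fin N) (Fin k))
    (hle : ∀ n, HasFreeColoring F (Fin n) (Fin k) → n ≤ N) :
    GR k (fun _ ↦ ⟨U, F⟩) = N + 1 := by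
  have hmem : N + 1 ∈ {n | ¬ HasFreeColoring F (Fin n) (Fin k)} := fun h ↦
    absurd (hle _ h) (by lia)
  simp only [GR, ← not_hasFreeColoring_iff]
  refine le_antisymm (Nat.sInf_le hmem) (le_csInf ⟨_, hmem⟩ fun n hn ↦ ?_)
  by_contra! hlt
  exact hn (hN.of_embedding (Fin.castLEEmb (Nat.le_of_lt_succ hlt)) (.refl _))

theorem card_le_of_hasFreeColoring_GH2 {V C : Type*} [Fintype V] [Fintype C]
    (h : HasFreeColoring GH2 V C) : Fintype.card V ≤ h2FreeOrder (Fintype.card C) := by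
  obtain ⟨c, hc, hF⟩ := h
  have hA : Avoids c univ univ ∅ :=
    ⟨fun x _ y _ _ ↦ .inl (mem_univ _), fun i _ ↦ cliqueExtFreeOn_of_free (hF i) univ, by simp⟩
  simpa [maxOrder, triangleFreeOrder] using hc.card_le_maxOrder hA

theorem hasFreeColoring_GH2_one : HasFreeColoring GH2 (Fin 4) (Fin 1) := by
  refine ⟨fun _ ↦ 0, fun _ _ _ ↦ .inl rfl, fun i hi ↦ ?_⟩
  simpa using Fintype.card_le_of_injective _ hi.some.injective

theorem hasFreeColoring_GH2_two : HasFreeColoring GH2 (Fin 17) (Fin 2) := by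
  have h : HasFreeColoring GH2 (ZMod 17) Bool := ⟨paleyColoring, isGallai_of_bool _,
    fun i ⟨f⟩ ↦ (isEmpty_hom_of_cliqueFree (cliqueFree_colorGraph_paleyColoring i)).elim f.toHom⟩
  exact h.of_embedding (Equiv.refl _).toEmbedding finTwoEquiv.symm

theorem hasFreeColoring_GH2_add_two {n k : ℕ} (h : HasFreeColoring GH2 (Fin n) (Fin k)) :
    HasFreeColoring GH2 (Fin (17 * n)) (Fin (k + 2)) := by
  have hlex : HasFreeColoring GH2 (ZMod 17 × Fin n) (Bool ⊕ Fin k) :=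
    .lex (isGallai_of_bool paleyColoring)
      (fun i ↦ isEmpty_hom_of_cliqueFree (cliqueFree_colorGraph_paleyColoring i))
      preconnected_GH2 h
  refine hlex.of_embedding finProdFinEquiv.symm.toEmbedding ?_
  exact (Equiv.sumComm _ _).trans
    ((Equiv.sumCongr (.refl _) finTwoEquiv.symm).trans finSumFinEquiv)

theorem hasFreeColoring_GH2 {k : ℕ} (hk : 1 ≤ k) :
    HasFreeColoring GH2 (Fin (h2FreeOrder k)) (Fin k) := by
  induction k using Nat.twoStepInduction with
  | zero => lia
  | one => exact hasFreeColoring_GH2_one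
  | more k ih _ =>
    obtain rfl | hk := Nat.eq_zero_or_pos k
    · exact hasFreeColoring_GH2_two
    · exact hasFreeColoring_GH2_add_two (ih hk)

theorem GR_GH2_eq_h2FreeOrder_add_one {k : ℕ} (hk : 1 ≤ k) :
    GR k (fun _ ↦ ⟨Fin 5, GH2⟩) = h2FreeOrder k + 1 :=
  GR_eq_add_one (hasFreeColoring_GH2 hk)
    fun n hn ↦ by simpa using card_le_of_hasFreeColoring_GH2 hn

end Main

end GallaiRamsey

/-- Theorem 1.3 (case H = H₂): for every `k ≥ 1`, `GR_k(H₂)` equals `17^(k/2) + 1`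
when `k` is even, and `4·17^((k-1)/2) + 1` when `k` is odd. -/
theorem GR_H2_value (k : ℕ) (hk : 1 ≤ k) :
    (Even k → GR k (fun _ => ⟨Fin 5, GH2⟩) = 17 ^ (k / 2) + 1) ∧
    (Odd k → GR k (fun _ => ⟨Fin 5, GH2⟩) = 4 * 17 ^ ((k - 1) / 2) + 1) := by
  rw [GallaiRamsey.GR_GH2_eq_h2FreeOrder_add_one hk]
  refine ⟨fun h ↦ ?_, ?_⟩
  · obtain ⟨m, rfl⟩ := h.two_dvd
    rw [GallaiRamsey.h2FreeOrder_two_mul, Nat.mul_div_cancel_left m two_pos]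
  · rintro ⟨m, rfl⟩
    rw [GallaiRamsey.h2FreeOrder_two_mul_add_one, Nat.add_sub_cancel,
      Nat.mul_div_cancel_left m two_pos]
end
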